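/- Let m = 2. Fix integers w ≥ 2 and d ≥ 4w+1. Take distinct lines L_1, L_2 ⊂ ℙ^2 and set {O} := L_1 ∩ L_2. Let A_1 ⊂ L_1 be the degree-(w+1) effective divisor of L_1 supported at O. Fix O_2 ∈ L_2 ∖ {O} and let A_2 ⊂ L_2 be the degree-w effective divisor of L_2 supported at O_2. Set A := A_1 ∪ A_2. Then for every P ∈ ⟨ν_d(A)⟩ with P ∉ ⟨ν_d(A')⟩ for any A' ⊊ A, one has br(P) = 2w+1 and sr(P) ≥ 2d+2−2w; moreover, there exists such a P with sr(P) = 2d+2−2w. -/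

import Mathlib

open scoped LinearAlgebra.Projectivization

noncomputable section

/-- The polynomial ring in `m+1` variables over `K`: homogeneous coordinate ring of `ℙ^m`. -/
abbrev PR (K : Type) [Field K] (m : ℕ) : Type := MvPolynomial (Fin (m+1)) K

/-- The space of degree-`d` forms in `m+1` variables. -/
abbrev Hd (K : Type) [Field K] (m d : ℕ) : Submodule K (PR K m) :=
  MvPolynomial.homogeneousSubmodule (Fin (m+1)) K d

/-- Projective `m`-space over `K`. -/
abbrev Pm (K : Type) [Field K] (m : ℕ) := ℙ K (Fin (m+1) → K)

/-- The target projective space `ℙ^n`, `n = C(m+d,m) - 1`, of the degree-`d` Veronese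
embedding, realized as the projectivization of the dual of the space of degree-`d` forms
(the space of degree-`d` symmetric tensors). -/
abbrev PN (K : Type) [Field K] (m d : ℕ) := ℙ K (Module.Dual K (Hd K m d))

variable {K : Type} [Field K] {m : ℕ}

/-- Hilbert function of `R/I` in degree `t`. -/
def hilbQ (I : Ideal (PR K m)) (t : ℕ) : ℕ :=
  Module.finrank K ((Hd K m t).map (Ideal.Quotient.mkₐ K I).toLinearMap)

/-- The degree (length) of the projective scheme defined by `I`: the eventual value of the
Hilbert function of `R/I`. -/
def idealDeg (I : Ideal (PR K m)) : ℕ := Filter.limsup (fun t => hilbQ I t) Filter.atTop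

/-- `h^1(𝓘_Z(d))` for the zero-dimensional scheme `Z` with (saturated) ideal `I`:
it equals `deg Z - dim (R/I)_d`. -/
def h1I (I : Ideal (PR K m)) (d : ℕ) : ℕ := idealDeg I - hilbQ I d

/-- An ideal is homogeneous. -/
def IsHomogI (I : Ideal (PR K m)) : Prop :=
  ∀ f ∈ I, ∀ n : ℕ, MvPolynomial.homogeneousComponent n f ∈ I

/-- An ideal is saturated with respect to the irrelevant maximal ideal. -/
def IsSatI (I : Ideal (PR K m)) : Prop :=
  ∀ f : PR K m, (∀ i, MvPolynomial.X i * f ∈ I) → f ∈ I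

/-- A closed subscheme of `ℙ^m`, given by its saturated homogeneous ideal. -/
structure PSub (K : Type) [Field K] (m : ℕ) where
  I : Ideal (PR K m)
  homog : IsHomogI I
  sat : IsSatI I

/-- A (closed sub)scheme is zero-dimensional iff the Hilbert function of `R/I` is bounded. -/
def IsZeroDimI (I : Ideal (PR K m)) : Prop := ∃ C, ∀ t, hilbQ I t ≤ C

/-- A polynomial vanishes at a projective point (every homogeneous component vanishes
at a representative). -/
def vanishesAt (f : PR K m) (a : Pm K m) : Prop :=
  ∀ n : ℕ, MvPolynomial.eval a.rep (MvPolynomial.homogeneousComponent n f) = 0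

/-- Zero locus of an ideal in `ℙ^m`. -/
def pzeroLocus (I : Ideal (PR K m)) : Set (Pm K m) := {a | ∀ f ∈ I, vanishesAt f a}

/-- The (saturated) homogeneous ideal of a set of points of `ℙ^m`. -/
def idealOfSet (S : Set (Pm K m)) : Ideal (PR K m) :=
  Ideal.span {f : PR K m | (∃ n, f.IsHomogeneous n) ∧ ∀ a ∈ S, MvPolynomial.eval a.rep f = 0}

/-- Saturation of a homogeneous ideal: the smallest saturated homogeneous ideal containing it. -/
def satIdeal (J : Ideal (PR K m)) : Ideal (PR K m) := sInf {J' | J ≤ J' ∧ IsHomogI J' ∧ IsSatI J'}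

/-- The scheme defined by the (saturated) ideal `I` is reduced. -/
def IsReducedI (I : Ideal (PR K m)) : Prop := I = idealOfSet (pzeroLocus I)

/-- Connected component of a zero-dimensional scheme at a point `a`: the largest subscheme
supported at `a`, i.e. the `a`-primary component. -/
def componentAt (I : Ideal (PR K m)) (a : Pm K m) : Ideal (PR K m) :=
  sInf {J | I ≤ J ∧ IsHomogI J ∧ IsSatI J ∧ pzeroLocus J ⊆ {a}}

/-- Residual scheme of `Z` with respect to the hypersurface `f = 0`: the colon ideal `(I_Z : f)`. -/
def resIdeal (I : Ideal (PR K m)) (f : PR K m) : Ideal (PR K m) :=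
  Submodule.colon I (Ideal.span {f})

/-- Degree of the scheme-theoretic intersection of the subschemes defined by `I` and `J`. -/
def interDeg (I J : Ideal (PR K m)) : ℕ := idealDeg (I ⊔ J)

/-- The degree-`d` Veronese image of a vector `v`: the evaluation-at-`v` functional on
degree-`d` forms. -/
def nu (d : ℕ) (v : Fin (m+1) → K) : Module.Dual K (Hd K m d) :=
  (MvPolynomial.aeval v).toLinearMap ∘ₗ (Hd K m d).subtype

/-- The linear span of the Veronese image `ν_d(S)` of a set `S` of points of `ℙ^m`. -/
def dualSpan (d : ℕ) (S : Set (Pm K m)) : Submodule K (Module.Dual K (Hd K m d)) :=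
  Submodule.span K ((fun a => nu d a.rep) '' S)

/-- The linear span `⟨ν_d(Z)⟩` of the Veronese image of the subscheme with ideal `I`:
the annihilator of the degree-`d` part of `I`. -/
def schemeSpanSub (I : Ideal (PR K m)) (d : ℕ) : Submodule K (Module.Dual K (Hd K m d)) where
  carrier := {φ | ∀ f : Hd K m d, (f : PR K m) ∈ I → φ f = 0}
  add_mem' := by
    intro a b ha hb f hf
    simp [LinearMap.add_apply, ha f hf, hb f hf]
  zero_mem' := by intro f hf; simp
  smul_mem' := by
    intro c a ha f hf
    simp [LinearMap.smul_apply, ha f hf]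

/-- `P ∈ ⟨ν_d(Z)⟩`, for `Z` the subscheme with ideal `I`. -/
def inSpanI (I : Ideal (PR K m)) (d : ℕ) (P : PN K m d) : Prop := P.rep ∈ schemeSpanSub I d

/-- `P ∈ ⟨ν_d(S)⟩` for a set `S` of points of `ℙ^m`. -/
def inSpanSet (d : ℕ) (S : Set (Pm K m)) (P : PN K m d) : Prop := P.rep ∈ dualSpan d S

/-- `L` is a linear subspace of `ℙ^m`. -/
def IsLinearSub (L : Set (Pm K m)) : Prop :=
  ∃ W : Submodule K (Fin (m+1) → K), L = {a | a.submodule ≤ W}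

/-- `L` is a line of `ℙ^m`. -/
def IsLine (L : Set (Pm K m)) : Prop :=
  ∃ W : Submodule K (Fin (m+1) → K), Module.finrank K W = 2 ∧ L = {a | a.submodule ≤ W}

/-- `L` is a plane of `ℙ^m`. -/
def IsPlane (L : Set (Pm K m)) : Prop :=
  ∃ W : Submodule K (Fin (m+1) → K), Module.finrank K W = 3 ∧ L = {a | a.submodule ≤ W}

/-- `J` is the (saturated homogeneous) ideal of a conic of `ℙ^m`: a degree-2 curve contained
in a plane (possibly reducible). -/
def IsConic (J : Ideal (PR K m)) : Prop :=
  ∃ (W : Submodule K (Fin (m+1) → K)) (q : PR K m),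
    Module.finrank K W = 3 ∧ q.IsHomogeneous 2 ∧
    q ∉ idealOfSet {a : Pm K m | a.submodule ≤ W} ∧
    J = satIdeal (idealOfSet {a : Pm K m | a.submodule ≤ W} ⊔ Ideal.span {q})

/-- The algebra of polynomial functions on a `K`-vector space. -/
def polyFunctions (K V : Type) [Field K] [AddCommGroup V] [Module K V] : Subalgebra K (V → K) :=
  Algebra.adjoin K {g : V → K | ∃ φ : V →ₗ[K] K, g = ⇑φ}

/-- Zariski closure of a subset of a projective space. -/
def zClosure {V : Type} [AddCommGroup V] [Module K V] (T : Set (ℙ K V)) : Set (ℙ K V) :=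
  {P | ∀ F ∈ polyFunctions K V, (∀ Q ∈ T, ∀ c : K, F (c • Q.rep) = 0) →
    ∀ c : K, F (c • P.rep) = 0}

/-- The Veronese variety `X_{m,d} = ν_d(ℙ^m)` as a subset of `PN K m d`. -/
def XSet (K : Type) [Field K] (m d : ℕ) : Set (PN K m d) :=
  {Q | ∃ a : Pm K m, Q.submodule = Submodule.span K {nu d a.rep}}

/-- The image `ν_d(S)` of a set of points of `ℙ^m`, as a subset of `PN K m d`. -/
def nuSet (d : ℕ) (S : Set (Pm K m)) : Set (PN K m d) :=
  {Q | ∃ a ∈ S, Q.submodule = Submodule.span K {nu d a.rep}}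

/-- The rank of a point `P` of `PN` with respect to a subset `Y ⊆ PN`. -/
def rankWrt {m d : ℕ} (Y : Set (PN K m d)) (P : PN K m d) : ℕ :=
  sInf {r | ∃ S : Finset (PN K m d), ↑S ⊆ Y ∧ S.card = r ∧
    P.rep ∈ Submodule.span K (Projectivization.rep '' (S : Set (PN K m d)))}

/-- The `s`-th secant variety of `Y ⊆ PN`: the Zariski closure of the union of the spans
of `s` points of `Y`. -/
def secantWrt {m d : ℕ} (Y : Set (PN K m d)) (s : ℕ) : Set (PN K m d) :=
  zClosure {Q | ∃ S : Finset (PN K m d), ↑S ⊆ Y ∧ S.card ≤ s ∧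
    Q.rep ∈ Submodule.span K (Projectivization.rep '' (S : Set (PN K m d)))}

/-- The border rank of `P` with respect to `Y ⊆ PN`. -/
def brankWrt {m d : ℕ} (Y : Set (PN K m d)) (P : PN K m d) : ℕ :=
  sInf {s | 0 < s ∧ P ∈ secantWrt Y s}

/-- Symmetric rank. -/
def srank {m : ℕ} (d : ℕ) (P : PN K m d) : ℕ := rankWrt (XSet K m d) P

/-- Border rank. -/
def brank {m : ℕ} (d : ℕ) (P : PN K m d) : ℕ := brankWrt (XSet K m d) P

/-- Cactus rank: minimal degree of a zero-dimensional closed subscheme `E ⊂ ℙ^m` with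
`P ∈ ⟨ν_d(E)⟩`. -/
def crank {m : ℕ} (d : ℕ) (P : PN K m d) : ℕ :=
  sInf {c | ∃ Z : PSub K m, IsZeroDimI Z.I ∧ idealDeg Z.I = c ∧ inSpanI Z.I d P}

/-- `σ_{s,r}(X_{m,d})`. -/
def sigmaSet (K : Type) [Field K] (m d s r : ℕ) : Set (PN K m d) :=
  {P | brank d P = s ∧ srank d P = r}

/-- A property `Φ` holds for a general `k`-tuple of points of the linear subspace of `ℙ^m`
determined by `W`. -/
def GenerallyOn (W : Submodule K (Fin (m+1) → K)) (k : ℕ)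
    (Φ : (Fin k → Pm K m) → Prop) : Prop :=
  ∃ w : Fin 3 → W, Submodule.span K (Set.range fun j => (w j : Fin (m+1) → K)) = W ∧
    ∃ F : MvPolynomial (Fin k × Fin 3) K, F ≠ 0 ∧
      ∀ c : Fin k → Fin 3 → K,
        MvPolynomial.eval (fun p => c p.1 p.2) F ≠ 0 →
        ∀ e : Fin k → Pm K m,
          (∀ i, (e i).submodule = Submodule.span K {∑ j, c i j • (w j : Fin (m+1) → K)}) → Φ e

end


section
open MvPolynomial

/-- A frame: a basis of `K^3` together with the dual basis of linear forms. -/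
structure TFrame {K : Type} [Field K] (v u x : Fin 3 → K) (p q r : PR K 2) : Prop where
  hp : p.IsHomogeneous 1
  hq : q.IsHomogeneous 1
  hr : r.IsHomogeneous 1
  hX : ∀ j, (X j : PR K 2) = C (v j) * p + C (u j) * q + C (x j) * r
  pv : eval v p = 1
  pu : eval u p = 0
  px : eval x p = 0
  qv : eval v q = 0
  qu : eval u q = 1
  qx : eval x q = 0
  rv : eval v r = 0
  ru : eval u r = 0
  rx : eval x r = 1

theorem TFrame.rot {K : Type} [Field K] {v u x : Fin 3 → K} {p q r : PR K 2} (F : TFrame v u x p q r) :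
    TFrame x v u r p q where
  hp := F.hr
  hq := F.hp
  hr := F.hq
  hX j := by rw [F.hX j]; ring
  pv := F.rx
  pu := F.rv
  px := F.ru
  qv := F.px
  qu := F.pv
  qx := F.pu
  rv := F.qx
  ru := F.qv
  rx := F.qu

theorem hom_scale {K : Type} [Field K] {S : Type} [CommRing S] [Algebra K S] {f : PR K 2} {n : ℕ}
    (hf : f.IsHomogeneous n) (y : S) (g : Fin 3 → S) :
    aeval (fun j => y * g j) f = y ^ n * aeval g f := by
  rw [aeval_def, aeval_def, eval₂_eq', eval₂_eq', Finset.mul_sum]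
  refine Finset.sum_congr rfl fun d hd => ?_
  have h := hf.degree_eq_sum_deg_support hd
  have h2 : n = ∑ j, d j := by
    rw [h]
    exact Finset.sum_subset (Finset.subset_univ _) (by intro i _ hi; simpa using hi)
  simp_rw [mul_pow]
  rw [Finset.prod_mul_distrib, Finset.prod_pow_eq_pow_sum, ← h2]
  ring

theorem eval_scale {K : Type} [Field K] {f : PR K 2} {n : ℕ}
    (hf : f.IsHomogeneous n) (y : K) (g : Fin 3 → K) :
    eval (y • g) f = y ^ n * eval g f := by
  have := hom_scale hf y g
  exact this

section
variable {K : Type} [Field K] {v u x : Fin 3 → K} {p q r : PR K 2}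

theorem TFrame.hom_mod (F : TFrame v u x p q r) {f : PR K 2} {n : ℕ} (hf : f.IsHomogeneous n) :
    f - C (eval v f) * p ^ n ∈ Ideal.span {q, r} := by
  rw [← Ideal.Quotient.eq]
  set φ := Ideal.Quotient.mkₐ K (Ideal.span {q, r}) with hφ
  have hq : φ q = 0 := by
    rw [hφ, Ideal.Quotient.mkₐ_eq_mk]
    exact Ideal.Quotient.eq_zero_iff_mem.2 (Ideal.subset_span (by simp))
  have hr : φ r = 0 := by
    rw [hφ, Ideal.Quotient.mkₐ_eq_mk]
    exact Ideal.Quotient.eq_zero_iff_mem.2 (Ideal.subset_span (by simp))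
  change φ f = φ _
  have h1 : φ f = aeval (fun j => φ p * algebraMap K _ (v j)) f := by
    conv_lhs => rw [← aeval_X_left_apply f]
    rw [← AlgHom.comp_apply, comp_aeval]
    congr 2
    funext j
    conv_lhs => rw [F.hX j]
    simp [hq, hr, ← algebraMap_eq, mul_comm]
  rw [h1, hom_scale hf]
  have h2 : aeval (fun j => algebraMap K (PR K 2 ⧸ Ideal.span {q, r}) (v j)) f
      = algebraMap K _ (eval v f) := by
    have := aeval_algebraMap_apply (PR K 2 ⧸ Ideal.span {q, r}) v f
    exact this
  rw [h2, map_mul, map_pow, ← algebraMap_eq, AlgHom.commutes, mul_comm]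

theorem hc_mul' {a b : PR K 2} {i : ℕ} (ha : a.IsHomogeneous i) (n : ℕ) :
    homogeneousComponent n (a * b) = if i ≤ n then a * homogeneousComponent (n - i) b else 0 := by
  let _ := gradedAlgebra (σ := Fin 3) (R := K)
  have key := DirectSum.coe_decompose_mul_of_left_mem (𝒜 := homogeneousSubmodule (Fin 3) K)
    (b := b) n ((mem_homogeneousSubmodule _ _).2 ha)
  have e : ∀ (k : ℕ) (z : PR K 2),
    ((DirectSum.decompose (homogeneousSubmodule (Fin 3) K) z) k : PR K 2)
      = homogeneousComponent k z := fun k z => decomposition.decompose'_apply z k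
  rw [e, e] at key
  exact key

theorem hc_mul {a b : PR K 2} {i : ℕ} (ha : a.IsHomogeneous i) (n : ℕ) :
    ∃ b' : PR K 2, b'.IsHomogeneous (n - i) ∧ homogeneousComponent n (a * b) = a * b' := by
  rw [hc_mul' ha]
  split_ifs
  · exact ⟨_, homogeneousComponent_isHomogeneous _ _, rfl⟩
  · exact ⟨0, isHomogeneous_zero _ _ _, by simp⟩

theorem TFrame.decomp (F : TFrame v u x p q r) {f : PR K 2} (n k : ℕ)
    (h : f ∈ Ideal.span {r, q ^ k}) :
    ∃ P S : PR K 2, S.IsHomogeneous (n - k) ∧ homogeneousComponent n f = r * P + q ^ k * S := by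
  obtain ⟨P, S, rfl⟩ := Ideal.mem_span_pair.1 h
  obtain ⟨P', _, hP⟩ := hc_mul (b := P) F.hr n
  have hqk : (q ^ k).IsHomogeneous k := by simpa using F.hq.pow k
  obtain ⟨S', hS, hS'⟩ := hc_mul (b := S) hqk n
  refine ⟨P', S', hS, ?_⟩
  rw [map_add, mul_comm P, mul_comm S, hP, hS']

theorem TFrame.homogI (F : TFrame v u x p q r) (N : ℕ) : IsHomogI (Ideal.span {r, q ^ N}) := by
  intro f hf n
  obtain ⟨P, S, _, h⟩ := F.decomp n N hf
  rw [h]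
  exact Ideal.mem_span_pair.2 ⟨P, S, by ring⟩

theorem TFrame.dichot (F : TFrame v u x p q r) {f : PR K 2} {n : ℕ} (hf : f.IsHomogeneous n) (N : ℕ) :
    f ∈ Ideal.span {r, q ^ N} ∨ ∃ k < N, ∃ P S : PR K 2, S.IsHomogeneous (n - k) ∧
      f = r * P + q ^ k * S ∧ eval v S ≠ 0 := by
  induction N with
  | zero => left; rw [Ideal.eq_top_of_unit_mem (Ideal.span {r, q ^ 0}) 1 1 (Ideal.subset_span (by simp)) (by simp)]; trivial
  | succ k ih =>
    rcases ih with h | ⟨k', hk', h⟩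
    · obtain ⟨P, S, hS, h⟩ := F.decomp n k h
      rw [homogeneousComponent_eq_self hf] at h
      by_cases h0 : eval v S = 0
      · left
        have := F.hom_mod hS
        rw [h0, map_zero, zero_mul, sub_zero] at this
        obtain ⟨s, t, hst⟩ := Ideal.mem_span_pair.1 this
        rw [h, ← hst]
        exact Ideal.mem_span_pair.2 ⟨P + q ^ k * t, s, by ring⟩
      · exact Or.inr ⟨k, by omega, P, S, hS, h, h0⟩
    · exact Or.inr ⟨k', by omega, h⟩

/-- restriction to the line `v + T u`. -/
noncomputable def rho (v u : Fin 3 → K) : PR K 2 →ₐ[K] Polynomial K :=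
  aeval (fun j => Polynomial.C (v j) + Polynomial.X * Polynomial.C (u j))

theorem rho_eval (v u : Fin 3 → K) (f : PR K 2) (t : K) :
    (rho v u f).eval t = eval (v + t • u) f := by
  have : ((Polynomial.aeval t).comp (rho v u)) = aeval (v + t • u) := by
    apply algHom_ext
    intro i
    simp [rho]; ring
  have := DFunLike.congr_fun this f
  simpa [coe_aeval_eq_eval, Polynomial.coe_aeval_eq_eval] using this

theorem rho_coeff_zero (v u : Fin 3 → K) (f : PR K 2) :
    (rho v u f).coeff 0 = eval v f := by
  rw [Polynomial.coeff_zero_eq_eval_zero, rho_eval]; simp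

theorem rho_lin {l : PR K 2} (hl : l.IsHomogeneous 1) (v u : Fin 3 → K) :
    rho v u l = Polynomial.C (eval v l) + Polynomial.X * Polynomial.C (eval u l) := by
  have h := (mem_homogeneousSubmodule 1 l).2 hl
  rw [homogeneousSubmodule_one_eq_span_X] at h
  induction h using Submodule.span_induction with
  | mem y hy => obtain ⟨j, rfl⟩ := hy; simp [rho]
  | zero => simp
  | add y z _ _ h1 h2 => 
    have h1 := h1 ((mem_homogeneousSubmodule 1 y).1 (by rwa [homogeneousSubmodule_one_eq_span_X]))
    have h2 := h2 ((mem_homogeneousSubmodule 1 z).1 (by rwa [homogeneousSubmodule_one_eq_span_X]))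
    simp [h1, h2]; ring
  | smul c y _ h1 => 
    have h1 := h1 ((mem_homogeneousSubmodule 1 y).1 (by rwa [homogeneousSubmodule_one_eq_span_X]))
    simp [h1, smul_eval]
    rw [Polynomial.smul_eq_C_mul]; ring

theorem TFrame.rp (F : TFrame v u x p q r) : rho v u p = 1 := by rw [rho_lin F.hp]; simp [F.pv, F.pu]
theorem TFrame.rq (F : TFrame v u x p q r) : rho v u q = Polynomial.X := by
  rw [rho_lin F.hq]; simp [F.qv, F.qu]
theorem TFrame.rr (F : TFrame v u x p q r) : rho v u r = 0 := by rw [rho_lin F.hr]; simp [F.rv, F.ru]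

theorem TFrame.mem_coeff (F : TFrame v u x p q r) {f : PR K 2} {N : ℕ}
    (h : f ∈ Ideal.span {r, q ^ N}) {i : ℕ} (hi : i < N) : (rho v u f).coeff i = 0 := by
  obtain ⟨P, S, rfl⟩ := Ideal.mem_span_pair.1 h
  rw [map_add, map_mul, map_mul, map_pow, F.rr, F.rq]
  simp only [mul_zero, zero_add, Polynomial.coeff_mul_X_pow']
  rw [if_neg (by omega)]

theorem TFrame.mem_of_coeff (F : TFrame v u x p q r) {f : PR K 2} {N n : ℕ} (hf : f.IsHomogeneous n)
    (h : ∀ i < N, (rho v u f).coeff i = 0) : f ∈ Ideal.span {r, q ^ N} := by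
  rcases F.dichot hf N with h1 | ⟨k, hk, P, S, hS, rfl, h0⟩
  · exact h1
  · exfalso
    have := h k hk
    rw [map_add, map_mul, map_mul, map_pow, F.rr, F.rq] at this
    simp only [zero_mul, zero_add, Polynomial.coeff_X_pow_mul'] at this
    rw [if_pos le_rfl, Nat.sub_self, rho_coeff_zero] at this
    exact h0 this

theorem lin_mem {I : Ideal (PR K 2)} {l f : PR K 2} (hl : l.IsHomogeneous 1)
    (h : ∀ i, X i * f ∈ I) : l * f ∈ I := by
  have h' := (mem_homogeneousSubmodule 1 l).2 hl
  rw [homogeneousSubmodule_one_eq_span_X] at h'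
  clear hl
  induction h' using Submodule.span_induction with
  | mem y hy => obtain ⟨j, rfl⟩ := hy; exact h j
  | zero => simp
  | add y z _ _ h1 h2 => rw [add_mul]; exact I.add_mem h1 h2
  | smul c y _ h1 => rw [smul_mul_assoc, smul_eq_C_mul]; exact I.mul_mem_left _ h1

theorem TFrame.sat_of (F : TFrame v u x p q r) {I : Ideal (PR K 2)} (hI : IsSatI I) {f : PR K 2}
    (h1 : p * f ∈ I) (h2 : q * f ∈ I) (h3 : r * f ∈ I) : f ∈ I := by
  apply hI
  intro j
  rw [F.hX j]
  have : (C (v j) * p + C (u j) * q + C (x j) * r) * f = C (v j) * (p * f) + C (u j) * (q * f) + C (x j) * (r * f) := by ring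
  rw [this]
  exact I.add_mem (I.add_mem (I.mul_mem_left _ h1) (I.mul_mem_left _ h2)) (I.mul_mem_left _ h3)

theorem TFrame.satI (F : TFrame v u x p q r) (N : ℕ) : IsSatI (Ideal.span {r, q ^ N}) := by
  intro f hf
  have h1 := lin_mem F.hp hf
  rw [← sum_homogeneousComponent f]
  refine Ideal.sum_mem _ fun n _ => ?_
  apply F.mem_of_coeff (homogeneousComponent_isHomogeneous n f)
  have h2 : p * homogeneousComponent n f ∈ Ideal.span {r, q ^ N} := by
    apply lin_mem F.hp
    intro i
    have := F.homogI N _ (hf i) (1 + n)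
    rw [hc_mul' (isHomogeneous_X K i), if_pos (by omega), Nat.add_sub_cancel_left] at this
    exact this
  intro i hi
  have := F.mem_coeff h2 hi
  rwa [map_mul, F.rp, one_mul] at this

/-- saturation step -/
theorem TFrame.sat_step (F : TFrame v u x p q r) {I : Ideal (PR K 2)} (hI : IsSatI I) {g s : PR K 2}
    {n : ℕ} (hs : s.IsHomogeneous n) (h0 : eval v s ≠ 0) (hq : q * g ∈ I) (hr : r * g ∈ I)
    (h : g * s ∈ I) : g ∈ I := by
  have h1 : g * p ^ n ∈ I := by
    obtain ⟨y, z, hyz⟩ := Ideal.mem_span_pair.1 (F.hom_mod hs)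
    have e : g * p ^ n = C ((eval v s)⁻¹) * (g * s - (y * (q * g) + z * (r * g))) := by
      have : s = C (eval v s) * p ^ n + (y * q + z * r) := by rw [hyz]; ring
      have e2 : C ((eval v s)⁻¹) * C (eval v s) = (1 : PR K 2) := by
        rw [← C_mul, inv_mul_cancel₀ h0, C_1]
      linear_combination (- g * p ^ n) * e2 - C ((eval v s)⁻¹) * g * this
    rw [e]
    exact I.mul_mem_left _ (I.sub_mem h (I.add_mem (I.mul_mem_left _ hq) (I.mul_mem_left _ hr)))
  clear h
  induction n generalizing s with
  | zero => simpa using h1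
  | succ n ih =>
    refine ih (s := p ^ n) (by simpa using F.hp.pow n) (by simp [F.pv]) ?_
    refine F.sat_of hI ?_ ?_ ?_
    · convert h1 using 1; ring
    · rw [← mul_assoc]; exact I.mul_mem_right _ hq
    · rw [← mul_assoc]; exact I.mul_mem_right _ hr

end
end

section
open MvPolynomial
section
variable {K : Type} [Field K] {v u x : Fin 3 → K} {p q r : PR K 2}

theorem TFrame.hilb (F : TFrame v u x p q r) (N t : ℕ) (ht : N ≤ t) :
    hilbQ (Ideal.span {r, q ^ N}) t = N := by
  set I := Ideal.span {r, q ^ N} with hI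
  let ψ : Hd K 2 t →ₗ[K] (Fin N → K) :=
    { toFun := fun f i => (rho v u f.1).coeff i
      map_add' := by intro f g; ext i; simp
      map_smul' := by intro f g; ext i; simp }
  let g := (Ideal.Quotient.mkₐ K I).toLinearMap.domRestrict (Hd K 2 t)
  have hker : LinearMap.ker g = LinearMap.ker ψ := by
    ext f
    rw [LinearMap.mem_ker, LinearMap.mem_ker]
    have h1 : g f = 0 ↔ f.1 ∈ I := Ideal.Quotient.eq_zero_iff_mem
    rw [h1]
    constructor
    · intro h
      funext i
      exact F.mem_coeff h i.2
    · intro h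
      exact F.mem_of_coeff ((mem_homogeneousSubmodule _ _).1 f.2) fun i hi => congrFun h ⟨i, hi⟩
  have hsurj : LinearMap.range ψ = ⊤ := by
    rw [LinearMap.range_eq_top]
    intro y
    have hm : ∀ i : Fin N, q ^ (i : ℕ) * p ^ (t - i) ∈ Hd K 2 t := by
      intro i
      rw [mem_homogeneousSubmodule]
      have := (F.hq.pow i).mul (F.hp.pow (t - i))
      have e : 1 * (i : ℕ) + 1 * (t - i) = t := by omega
      rwa [e] at this
    refine ⟨∑ i, y i • ⟨_, hm i⟩, ?_⟩
    rw [map_sum]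
    funext j
    rw [Finset.sum_apply, Finset.sum_eq_single j]
    · simp [ψ, F.rp, F.rq]
    · intro b _ hb
      have : ((j : ℕ)) ≠ b := fun h => hb (Fin.ext h.symm)
      simp [ψ, F.rp, F.rq, Polynomial.coeff_X_pow, this]
    · simp
  unfold hilbQ
  have e1 : (Hd K 2 t).map (Ideal.Quotient.mkₐ K I).toLinearMap = LinearMap.range g := by
    rw [LinearMap.range_domRestrict]
  rw [e1, ← (g.quotKerEquivRange).finrank_eq, hker, (ψ.quotKerEquivRange).finrank_eq, hsurj]
  simp

theorem TFrame.deg (F : TFrame v u x p q r) (N : ℕ) :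
    idealDeg (Ideal.span {r, q ^ N}) = N := by
  unfold idealDeg
  have : (fun t => hilbQ (Ideal.span {r, q ^ N}) t) =ᶠ[Filter.atTop] fun _ => N := by
    filter_upwards [Filter.eventually_ge_atTop N] with t ht using F.hilb N t ht
  rw [Filter.limsup_congr this, Filter.limsup_const]

theorem homog_reduce {I J : Ideal (PR K 2)} (hI : IsHomogI I)
    (h : ∀ n, ∀ f ∈ I, f.IsHomogeneous n → f ∈ J) : I ≤ J := by
  intro f hf
  rw [← sum_homogeneousComponent f]
  exact J.sum_mem fun n _ => h n _ (hI f hf n) (homogeneousComponent_isHomogeneous n f)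

theorem TFrame.ident [IsAlgClosed K] (F : TFrame v u x p q r) (A : PSub K 2) (O : Pm K 2)
    (hv : O.rep = v) (hr : r ∈ A.I) (hz : pzeroLocus A.I = {O}) (M : ℕ) (hM : idealDeg A.I = M) :
    A.I = Ideal.span {r, q ^ M} := by
  have hrad : q ∈ A.I.radical := by
    rw [← vanishingIdeal_zeroLocus_eq_radical (K := K), mem_vanishingIdeal_iff]
    intro y hy
    change eval y q = 0
    by_cases hy0 : y = 0
    · have := eval_scale F.hq (0 : K) y
      rw [hy0]; simpa using this
    have hmem : (Projectivization.mk K y hy0) ∈ pzeroLocus A.I := by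
      intro f hf n
      obtain ⟨c, hc⟩ := Projectivization.exists_smul_eq_mk_rep K y hy0
      rw [← hc]
      have := eval_scale (homogeneousComponent_isHomogeneous n f) (c : K) y
      have h2 : eval y (homogeneousComponent n f) = 0 :=
        (mem_zeroLocus_iff.1 hy) _ (A.homog f hf n)
      rw [h2, mul_zero] at this
      exact this
    rw [hz, Set.mem_singleton_iff] at hmem
    have h3 := hmem.symm.trans rfl
    rw [← O.mk_rep, Projectivization.mk_eq_mk_iff'] at h3
    obtain ⟨c, hc⟩ := h3
    rw [hv] at hc
    have := eval_scale F.hq c y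
    rw [hc, F.qv] at this
    have hc0 : c ≠ 0 := by
      rintro rfl
      rw [zero_smul] at hc
      exact O.rep_nonzero (by rw [hv, ← hc])
    simpa [hc0] using this.symm
  classical
  have hex : ∃ n, q ^ n ∈ A.I := hrad
  set N := Nat.find hex with hN
  have hqN : q ^ N ∈ A.I := Nat.find_spec hex
  have hN0 : N ≠ 0 := by
    intro h0
    rw [h0, pow_zero] at hqN
    have : O ∈ pzeroLocus A.I := by rw [hz]; rfl
    have := this 1 hqN 0
    simp at this
  have hlt : q ^ (N - 1) ∉ A.I := Nat.find_min hex (by omega)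
  have hA : A.I = Ideal.span {r, q ^ N} := by
    apply le_antisymm
    · refine homog_reduce A.homog fun n f hf hfn => ?_
      rcases F.dichot hfn N with h | ⟨k, hk, P, S, hS, rfl, h0⟩
      · exact h
      · exfalso
        apply hlt
        refine F.sat_step A.sat hS h0 ?_ (A.I.mul_mem_right _ hr) ?_
        · convert hqN using 1
          rw [← pow_succ']; congr 1; omega
        · have e : q ^ (N - 1) * S = q ^ (N - 1 - k) * (r * P + q ^ k * S) - (q ^ (N-1-k) * P) * r := by
            have : q ^ (N - 1) = q ^ (N - 1 - k) * q ^ k := by rw [← pow_add]; congr 1; omega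
            rw [this]; ring
          rw [e]
          exact A.I.sub_mem (A.I.mul_mem_left _ hf) (A.I.mul_mem_left _ hr)
    · rw [Ideal.span_le]
      intro y hy
      rcases hy with rfl | rfl
      · exact hr
      · exact hqN
  have := F.deg N
  rw [← hA, hM] at this
  rw [this]; exact hA

theorem exists_frame (L1 L2 : Set (Pm K 2)) (hL1 : IsLine L1) (hL2 : IsLine L2)
    (O : Pm K 2) (hO : L1 ∩ L2 = {O}) (O2 : Pm K 2) (hO2 : O2 ∈ L2) (hO2O : O2 ≠ O) :
    ∃ (e1 : Fin 3 → K) (a b c : PR K 2), TFrame O.rep e1 O2.rep a b c ∧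
      c ∈ idealOfSet L1 ∧ b ∈ idealOfSet L2 := by
  obtain ⟨W1, hW1, rfl⟩ := hL1
  obtain ⟨W2, hW2, rfl⟩ := hL2
  have hOm : O ∈ {a : Pm K 2 | a.submodule ≤ W1} ∩ {a | a.submodule ≤ W2} := by rw [hO]; rfl
  have hsub : ∀ (a : Pm K 2) (W : Submodule K (Fin 3 → K)), a.submodule ≤ W ↔ a.rep ∈ W := by
    intro a W
    rw [Projectivization.submodule_eq, Submodule.span_singleton_le_iff_mem]
  have hO1 : O.rep ∈ W1 := (hsub _ _).1 hOm.1
  have hO2' : O.rep ∈ W2 := (hsub _ _).1 hOm.2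
  have hO2'' : O2.rep ∈ W2 := (hsub _ _).1 hO2
  have huniq : ∀ y, y ∈ W1 → y ∈ W2 → y ≠ 0 → ∃ c : K, c • O.rep = y := by
    intro y h1 h2 h0
    have : Projectivization.mk K y h0 ∈ {a : Pm K 2 | a.submodule ≤ W1} ∩ {a | a.submodule ≤ W2} := by
      constructor
      · rw [Set.mem_ofPred_eq, Projectivization.submodule_mk, Submodule.span_singleton_le_iff_mem]; exact h1
      · rw [Set.mem_ofPred_eq, Projectivization.submodule_mk, Submodule.span_singleton_le_iff_mem]; exact h2
    rw [hO, Set.mem_singleton_iff, ← O.mk_rep, Projectivization.mk_eq_mk_iff'] at this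
    exact this
  have hO2W1 : O2.rep ∉ W1 := by
    intro h
    obtain ⟨c, hc⟩ := huniq _ h hO2'' O2.rep_nonzero
    apply hO2O
    rw [← O.mk_rep, ← O2.mk_rep, Projectivization.mk_eq_mk_iff']
    exact ⟨c, hc⟩
  obtain ⟨e1, he1, he1'⟩ : ∃ e1 ∈ W1, e1 ∉ Submodule.span K {O.rep} := by
    by_contra hcon
    push Not at hcon
    have hle : W1 ≤ Submodule.span K {O.rep} := hcon
    have h1 := Submodule.finrank_mono hle
    rw [finrank_span_singleton O.rep_nonzero, hW1] at h1
    omega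
  have he10 : e1 ≠ 0 := by rintro rfl; exact he1' (Submodule.zero_mem _)
  have he1W2 : e1 ∉ W2 := by
    intro h
    obtain ⟨c, hc⟩ := huniq _ he1 h he10
    exact he1' (Submodule.mem_span_singleton.2 ⟨c, hc⟩)
  have hli : LinearIndependent K ![O.rep, e1, O2.rep] := by
    rw [Fintype.linearIndependent_iff]
    intro g hg
    rw [Fin.sum_univ_three] at hg
    simp only [Matrix.cons_val_zero, Matrix.cons_val_one, Matrix.cons_val] at hg
    have g2 : g 2 = 0 := by
      by_contra h0
      apply hO2W1
      rw [← Submodule.smul_mem_iff _ h0]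
      have e : g 2 • O2.rep = -(g 0 • O.rep + g 1 • e1) := by
        rw [eq_neg_iff_add_eq_zero, ← hg]; abel
      rw [e]
      exact W1.neg_mem (W1.add_mem (W1.smul_mem _ hO1) (W1.smul_mem _ he1))
    rw [g2, zero_smul, add_zero] at hg
    have g1 : g 1 = 0 := by
      by_contra h0
      apply he1W2
      rw [← Submodule.smul_mem_iff _ h0]
      have e : g 1 • e1 = -(g 0 • O.rep) := by
        rw [eq_neg_iff_add_eq_zero, ← hg]; abel
      rw [e]
      exact W2.neg_mem (W2.smul_mem _ hO2')
    rw [g1, zero_smul, add_zero, smul_eq_zero] at hg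
    have g0 : g 0 = 0 := hg.resolve_right O.rep_nonzero
    intro i
    fin_cases i
    · exact g0
    · exact g1
    · exact g2
  let B := basisOfLinearIndependentOfCardEqFinrank hli (by simp)
  have hB0 : B 0 = O.rep := by simp [B]
  have hB1 : B 1 = e1 := by simp [B]
  have hB2 : B 2 = O2.rep := by simp [B]
  let lf : Fin 3 → PR K 2 := fun i => ∑ j, C (B.coord i (Pi.single j 1)) * X j
  have hlf : ∀ i, (lf i).IsHomogeneous 1 := fun i =>
    IsHomogeneous.sum _ _ _ fun j _ => isHomogeneous_C_mul_X _ _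
  have hev : ∀ i y, eval y (lf i) = B.coord i y := by
    intro i y
    have hy : y = ∑ j, y j • (Pi.single j (1 : K) : Fin 3 → K) := pi_eq_sum_univ' y
    conv_rhs => rw [hy, map_sum]
    simp only [lf, map_sum, map_mul, eval_C, eval_X, map_smul, smul_eq_mul]
    exact Finset.sum_congr rfl fun j _ => mul_comm _ _
  have hX : ∀ j, (X j : PR K 2) = C (O.rep j) * lf 0 + C (e1 j) * lf 1 + C (O2.rep j) * lf 2 := by
    intro j
    have key : ∀ k : Fin 3, O.rep j * B.coord 0 (Pi.single k 1) + e1 j * B.coord 1 (Pi.single k 1)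
        + O2.rep j * B.coord 2 (Pi.single k 1) = (Pi.single k (1 : K) : Fin 3 → K) j := by
      intro k
      have := congrFun (B.sum_repr (Pi.single k 1)) j
      rw [Fin.sum_univ_three, hB0, hB1, hB2] at this
      rw [← this]
      simp only [Module.Basis.coord_apply, Pi.add_apply, Pi.smul_apply, smul_eq_mul]
      ring
    simp only [lf, Finset.mul_sum, ← Finset.sum_add_distrib]
    have : ∀ k : Fin 3, C (O.rep j) * (C (B.coord 0 (Pi.single k 1)) * X k)
        + C (e1 j) * (C (B.coord 1 (Pi.single k 1)) * X k)
        + C (O2.rep j) * (C (B.coord 2 (Pi.single k 1)) * X k)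
        = C ((Pi.single k (1 : K) : Fin 3 → K) j) * (X k : PR K 2) := by
      intro k
      rw [← key k]
      simp only [map_add, map_mul]
      ring
    rw [Finset.sum_congr rfl fun k _ => this k, Finset.sum_eq_single j]
    · simp
    · intro k _ hk
      rw [Pi.single_eq_of_ne (Ne.symm hk)]; simp
    · simp
  have hco : ∀ i k, B.coord i (B k) = if k = i then 1 else 0 := by
    intro i k
    rw [Module.Basis.coord_apply, Module.Basis.repr_self, Finsupp.single_apply]
  refine ⟨e1, lf 0, lf 1, lf 2, ⟨hlf 0, hlf 1, hlf 2, hX, ?_, ?_, ?_, ?_, ?_, ?_, ?_, ?_, ?_⟩, ?_, ?_⟩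
  · rw [hev, ← hB0, hco]; simp
  · rw [hev, ← hB1, hco]; simp
  · rw [hev, ← hB2, hco]; simp
  · rw [hev, ← hB0, hco]; simp
  · rw [hev, ← hB1, hco]; simp
  · rw [hev, ← hB2, hco]; simp
  · rw [hev, ← hB0, hco]; simp
  · rw [hev, ← hB1, hco]; simp
  · rw [hev, ← hB2, hco]; simp
  · refine Ideal.subset_span ⟨⟨1, hlf 2⟩, fun s hs => ?_⟩
    have hs := (hsub _ _).1 hs
    rw [hev]
    have := B.sum_repr s.rep
    rw [Fin.sum_univ_three, hB0, hB1, hB2] at this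
    by_contra h0
    apply hO2W1
    rw [← Submodule.smul_mem_iff _ h0]
    have e : B.coord 2 s.rep • O2.rep = s.rep - (B.repr s.rep 0 • O.rep + B.repr s.rep 1 • e1) := by
      rw [Module.Basis.coord_apply, eq_sub_iff_add_eq]
      conv_rhs => rw [← this]
      abel
    rw [e]
    exact W1.sub_mem hs (W1.add_mem (W1.smul_mem _ hO1) (W1.smul_mem _ he1))
  · refine Ideal.subset_span ⟨⟨1, hlf 1⟩, fun s hs => ?_⟩
    have hs := (hsub _ _).1 hs
    rw [hev]
    have := B.sum_repr s.rep
    rw [Fin.sum_univ_three, hB0, hB1, hB2] at this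
    by_contra h0
    apply he1W2
    rw [← Submodule.smul_mem_iff _ h0]
    have e : B.coord 1 s.rep • e1 = s.rep - (B.repr s.rep 0 • O.rep + B.repr s.rep 2 • O2.rep) := by
      rw [Module.Basis.coord_apply, eq_sub_iff_add_eq]
      conv_rhs => rw [← this]
      abel
    rw [e]
    exact W2.sub_mem hs (W2.add_mem (W2.smul_mem _ hO2') (W2.smul_mem _ hO2''))
end
end

section
open MvPolynomial
section
variable {K : Type} [Field K]

/-- extension of a functional on degree `d` forms to all polynomials -/
noncomputable def dext {d : ℕ} (φ : Module.Dual K (Hd K 2 d)) : PR K 2 →ₗ[K] K :=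
  φ ∘ₗ (homogeneousComponent d).codRestrict (Hd K 2 d) (fun f => homogeneousComponent_mem d f)

theorem dext_hom {d : ℕ} (φ : Module.Dual K (Hd K 2 d)) {f : PR K 2} (hf : f.IsHomogeneous d) :
    dext φ f = φ ⟨f, hf⟩ := by
  unfold dext
  simp only [LinearMap.comp_apply]
  congr 1
  apply Subtype.ext
  simp only [LinearMap.codRestrict_apply]
  rw [homogeneousComponent_of_mem hf, if_pos rfl]

theorem dext_hc {d : ℕ} (φ : Module.Dual K (Hd K 2 d)) (f : PR K 2) :
    dext φ (homogeneousComponent d f) = dext φ f := by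
  rw [dext_hom φ (homogeneousComponent_isHomogeneous d f)]; rfl

theorem dext_zero_of_mem {d : ℕ} {φ : Module.Dual K (Hd K 2 d)} {I : Ideal (PR K 2)} (hI : IsHomogI I)
    (h : φ ∈ schemeSpanSub I d) {f : PR K 2} (hf : f ∈ I) : dext φ f = 0 := by
  rw [← dext_hc, dext_hom φ (homogeneousComponent_isHomogeneous d f)]
  exact h _ (hI f hf d)

theorem mem_scheme_of_dext {d : ℕ} {φ : Module.Dual K (Hd K 2 d)} {I : Ideal (PR K 2)}
    (h : ∀ f ∈ I, f.IsHomogeneous d → dext φ f = 0) : φ ∈ schemeSpanSub I d := by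
  intro f hf
  have := h f.1 hf f.2
  rwa [dext_hom φ f.2] at this

theorem dext_nu (d : ℕ) (v : Fin 3 → K) {f : PR K 2} (hf : f.IsHomogeneous d) :
    dext (nu d v) f = eval v f := by
  rw [dext_hom _ hf]; rfl

theorem dext_add {d : ℕ} (φ ψ : Module.Dual K (Hd K 2 d)) : dext (φ + ψ) = dext φ + dext ψ := rfl
theorem dext_smul {d : ℕ} (y : K) (φ : Module.Dual K (Hd K 2 d)) : dext (y • φ) = y • dext φ := rfl
theorem dext_sum {d : ℕ} {ι : Type} (s : Finset ι) (φ : ι → Module.Dual K (Hd K 2 d)) :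
    dext (∑ i ∈ s, φ i) = ∑ i ∈ s, dext (φ i) := by
  ext f; simp [dext]

/-- the conditions that a functional kills the ideal -/
structure Core (a b c : PR K 2) (w d : ℕ) (Φ : PR K 2 →ₗ[K] K) : Prop where
  hom : ∀ f, Φ (homogeneousComponent d f) = Φ f
  bc : ∀ h, Φ (b * c * h) = 0
  bw : ∀ h, Φ (b ^ (w + 1) * h) = 0
  ca : ∀ h, Φ (c * a ^ w * h) = 0

variable {v u x : Fin 3 → K} {a b c : PR K 2} {w d : ℕ} {Φ : PR K 2 →ₗ[K] K}

theorem Core.b_eval (H : Core a b c w d Φ) (F : TFrame v u x a b c) (hw : 1 ≤ w)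
    {h : PR K 2} {n : ℕ} (hh : h.IsHomogeneous n) :
    Φ (b ^ w * h) = eval v h * Φ (b ^ w * a ^ n) := by
  obtain ⟨y, z, hyz⟩ := Ideal.mem_span_pair.1 (F.hom_mod hh)
  obtain ⟨k, rfl⟩ := Nat.exists_eq_add_of_le' hw
  have e : b ^ (k+1) * h = eval v h • (b ^ (k+1) * a ^ n) + (b ^ (k + 1 + 1) * y + b * c * (b ^ k * z)) := by
    rw [smul_eq_C_mul]
    linear_combination (-b ^ (k+1)) * hyz
  rw [e, map_add, map_add, H.bc, H.bw, map_smul, smul_eq_mul]; ring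

theorem Core.c_eval (H : Core a b c w d Φ) (F : TFrame v u x a b c) (hw : 1 ≤ w)
    {h : PR K 2} {n : ℕ} (hh : h.IsHomogeneous n) :
    Φ (c * a ^ (w - 1) * h) = eval x h * Φ (c * a ^ (w - 1) * c ^ n) := by
  obtain ⟨y, z, hyz⟩ := Ideal.mem_span_pair.1 (F.rot.hom_mod hh)
  obtain ⟨k, rfl⟩ := Nat.exists_eq_add_of_le' hw
  rw [Nat.add_sub_cancel]
  have e : c * a ^ k * h = eval x h • (c * a ^ k * c ^ n) + (c * a ^ (k + 1) * y + b * c * (a ^ k * z)) := by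
    rw [smul_eq_C_mul]
    linear_combination (-c * a ^ k) * hyz
  rw [e, map_add, map_add, H.bc, H.ca, map_smul, smul_eq_mul]; ring

theorem hpow {l : PR K 2} (hl : l.IsHomogeneous 1) (n : ℕ) : (l ^ n).IsHomogeneous n := by
  simpa using hl.pow n

theorem TFrame.memI (F : TFrame v u x a b c) {w : ℕ} (hw : 1 ≤ w) (h : PR K 2) :
    b * c * h ∈ Ideal.span {c, b ^ (w + 1)} ⊓ Ideal.span {b, a ^ w} ∧
    b ^ (w+1) * h ∈ Ideal.span {c, b ^ (w + 1)} ⊓ Ideal.span {b, a ^ w} ∧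
    c * a ^ w * h ∈ Ideal.span {c, b ^ (w + 1)} ⊓ Ideal.span {b, a ^ w} := by
  refine ⟨⟨Ideal.mem_span_pair.2 ⟨b * h, 0, by ring⟩, Ideal.mem_span_pair.2 ⟨c * h, 0, by ring⟩⟩,
    ⟨Ideal.mem_span_pair.2 ⟨0, h, by ring⟩, Ideal.mem_span_pair.2 ⟨b ^ w * h, 0, by ring⟩⟩,
    ⟨Ideal.mem_span_pair.2 ⟨a ^ w * h, 0, by ring⟩, Ideal.mem_span_pair.2 ⟨0, c * h, by ring⟩⟩⟩

theorem homogI_inf {I J : Ideal (PR K 2)} (hI : IsHomogI I) (hJ : IsHomogI J) : IsHomogI (I ⊓ J) :=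
  fun f hf n => ⟨hI f hf.1 n, hJ f hf.2 n⟩

theorem satI_inf {I J : Ideal (PR K 2)} (hI : IsSatI I) (hJ : IsSatI J) : IsSatI (I ⊓ J) :=
  fun f hf => ⟨hI f fun i => (hf i).1, hJ f fun i => (hf i).2⟩

theorem core_of (F : TFrame v u x a b c) (hw : 1 ≤ w) {φ : Module.Dual K (Hd K 2 d)}
    (h : φ ∈ schemeSpanSub (Ideal.span {c, b ^ (w + 1)} ⊓ Ideal.span {b, a ^ w}) d) :
    Core a b c w d (dext φ) where
  hom := dext_hc φ
  bc g := dext_zero_of_mem (homogI_inf (F.homogI _) (F.rot.homogI _)) h (F.memI hw g).1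
  bw g := dext_zero_of_mem (homogI_inf (F.homogI _) (F.rot.homogI _)) h (F.memI hw g).2.1
  ca g := dext_zero_of_mem (homogI_inf (F.homogI _) (F.rot.homogI _)) h (F.memI hw g).2.2

theorem alpha_ne (F : TFrame v u x a b c) (hw : 1 ≤ w) (hd : w ≤ d) {φ : Module.Dual K (Hd K 2 d)}
    (h : φ ∈ schemeSpanSub (Ideal.span {c, b ^ (w + 1)} ⊓ Ideal.span {b, a ^ w}) d)
    (hmin : ∀ A' : PSub K 2, Ideal.span {c, b ^ (w + 1)} ⊓ Ideal.span {b, a ^ w} < A'.I →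
      φ ∉ schemeSpanSub A'.I d) : dext φ (b ^ w * a ^ (d - w)) ≠ 0 := by
  intro h0
  have H := core_of F hw h
  let A' : PSub K 2 := ⟨Ideal.span {c, b ^ w} ⊓ Ideal.span {b, a ^ w},
    homogI_inf (F.homogI _) (F.rot.homogI _), satI_inf (F.satI _) (F.rot.satI _)⟩
  apply hmin A'
  · refine lt_of_le_of_ne (inf_le_inf_right _ ?_) ?_
    · rw [Ideal.span_le]
      rintro y (rfl | rfl)
      · exact Ideal.subset_span (by simp)
      · exact Ideal.mem_span_pair.2 ⟨0, b, by ring⟩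
    · intro e
      have h1 : b ^ w * a ^ w ∈ A'.I :=
        ⟨Ideal.mem_span_pair.2 ⟨0, a ^ w, by ring⟩, Ideal.mem_span_pair.2 ⟨0, b ^ w, by ring⟩⟩
      rw [← e] at h1
      have := F.mem_coeff h1.1 (Nat.lt_succ_self w)
      rw [map_mul, map_pow, map_pow, F.rp, F.rq] at this
      simp at this
  · apply mem_scheme_of_dext
    intro f hf hfd
    obtain ⟨P, S, hS, e⟩ := F.decomp d w hf.1
    rw [homogeneousComponent_of_mem hfd, if_pos rfl] at e
    have hbS : b ^ w * S ∈ Ideal.span {b, a ^ w} := by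
      obtain ⟨k, rfl⟩ := Nat.exists_eq_add_of_le' hw
      exact Ideal.mem_span_pair.2 ⟨b ^ k * S, 0, by ring⟩
    have hcP : c * P ∈ Ideal.span {b, a ^ w} := by
      have := Ideal.sub_mem _ hf.2 hbS
      rw [e, add_sub_cancel_right] at this
      exact this
    rw [e, map_add, dext_zero_of_mem (homogI_inf (F.homogI _) (F.rot.homogI _)) h
      ⟨Ideal.mem_span_pair.2 ⟨P, 0, by ring⟩, hcP⟩, H.b_eval F hw hS, h0]
    simp

theorem beta_ne (F : TFrame v u x a b c) (hw : 1 ≤ w) (hd : w ≤ d) {φ : Module.Dual K (Hd K 2 d)}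
    (h : φ ∈ schemeSpanSub (Ideal.span {c, b ^ (w + 1)} ⊓ Ideal.span {b, a ^ w}) d)
    (hmin : ∀ A' : PSub K 2, Ideal.span {c, b ^ (w + 1)} ⊓ Ideal.span {b, a ^ w} < A'.I →
      φ ∉ schemeSpanSub A'.I d) : dext φ (c * a ^ (w - 1) * c ^ (d - w)) ≠ 0 := by
  intro h0
  have H := core_of F hw h
  let A' : PSub K 2 := ⟨Ideal.span {c, b ^ (w + 1)} ⊓ Ideal.span {b, a ^ (w - 1)},
    homogI_inf (F.homogI _) (F.rot.homogI _), satI_inf (F.satI _) (F.rot.satI _)⟩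
  apply hmin A'
  · refine lt_of_le_of_ne (inf_le_inf_left _ ?_) ?_
    · rw [Ideal.span_le]
      rintro y (rfl | rfl)
      · exact Ideal.subset_span (by simp)
      · refine Ideal.mem_span_pair.2 ⟨0, a, ?_⟩
        obtain ⟨k, rfl⟩ := Nat.exists_eq_add_of_le' hw
        rw [Nat.add_sub_cancel]; ring
    · intro e
      have h1 : c * a ^ (w - 1) ∈ A'.I :=
        ⟨Ideal.mem_span_pair.2 ⟨a ^ (w - 1), 0, by ring⟩, Ideal.mem_span_pair.2 ⟨0, c, by ring⟩⟩
      rw [← e] at h1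
      have := F.rot.mem_coeff h1.2 (show w - 1 < w by omega)
      rw [map_mul, map_pow, F.rot.rp, F.rot.rq] at this
      simp at this
  · apply mem_scheme_of_dext
    intro f hf hfd
    obtain ⟨P, S, hS, e⟩ := F.rot.decomp d (w - 1) hf.2
    rw [homogeneousComponent_of_mem hfd, if_pos rfl] at e
    obtain ⟨y, z, hyz⟩ := Ideal.mem_span_pair.1 (F.hom_mod hS)
    have hv : eval v f = 0 := by
      have := F.mem_coeff hf.1 (Nat.succ_pos w)
      rwa [rho_coeff_zero] at this
    have hvS : eval v S = 0 := by
      rw [e] at hv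
      simpa [F.pv, F.qv, F.rv] using hv
    rw [hvS] at hyz
    have e2 : f = b * (P + a ^ (w - 1) * y) + c * a ^ (w - 1) * z := by
      rw [e]
      linear_combination (-a ^ (w - 1)) * hyz + a ^ (w-1) * a ^ (d - (w - 1)) * (C_0 (R := K) (σ := Fin 3))
    have m1 : c * a ^ (w - 1) * z ∈ Ideal.span {c, b ^ (w + 1)} :=
      Ideal.mem_span_pair.2 ⟨a ^ (w - 1) * z, 0, by ring⟩
    have m2 : b * (P + a ^ (w - 1) * y) ∈ Ideal.span {c, b ^ (w + 1)} := by
      have := Ideal.sub_mem _ hf.1 m1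
      rwa [e2, add_sub_cancel_right] at this
    rw [e2, map_add, dext_zero_of_mem (homogI_inf (F.homogI _) (F.rot.homogI _)) h
      ⟨m2, Ideal.mem_span_pair.2 ⟨P + a ^ (w - 1) * y, 0, by ring⟩⟩, zero_add, ← dext_hc, hc_mul'
        (i := w)]
    · rw [if_pos hd, H.c_eval F hw (homogeneousComponent_isHomogeneous _ _), h0, mul_zero]
    · have := F.hr.mul (hpow F.hp (w - 1))
      rwa [show 1 + (w - 1) = w by omega] at this

theorem min_of (F : TFrame v u x a b c) (hw : 1 ≤ w) (hd : 2 * w ≤ d) {φ : Module.Dual K (Hd K 2 d)}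
    (hα : dext φ (b ^ w * a ^ (d - w)) ≠ 0) (hβ : dext φ (c * a ^ (w - 1) * c ^ (d - w)) ≠ 0)
    (A' : PSub K 2) (hlt : Ideal.span {c, b ^ (w + 1)} ⊓ Ideal.span {b, a ^ w} < A'.I) :
      φ ∉ schemeSpanSub A'.I d := by
  intro hφ
  obtain ⟨f, n, hfn, hfA, hf⟩ : ∃ f n, f.IsHomogeneous n ∧ f ∈ A'.I ∧
      f ∉ Ideal.span {c, b ^ (w + 1)} ⊓ Ideal.span {b, a ^ w} := by
    by_contra hcon
    push Not at hcon
    exact absurd hlt (not_lt_of_ge (homog_reduce A'.homog fun n f hf hn => hcon f n hn hf))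
  have mI := fun h => F.memI hw h
  rcases F.dichot hfn (w + 1) with h1 | ⟨k, hk, P, S, hS, e, h0⟩
  · rcases F.rot.dichot hfn w with h2 | ⟨k, hk, P, S, hS, e, h0⟩
    · exact hf ⟨h1, h2⟩
    · have : c * a ^ (w - 1) ∈ A'.I := by
        apply F.rot.sat_step A'.sat hS h0
        · apply hlt.le
          convert (mI 1).2.2 using 1
          obtain ⟨k, rfl⟩ := Nat.exists_eq_add_of_le' hw
          rw [Nat.add_sub_cancel]; ring
        · apply hlt.le
          convert (mI (a ^ (w - 1))).1 using 1
          ring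
        · have e1 : c * a ^ (w - 1) * S = f * (a ^ (w - 1 - k) * c) - b * c * (a ^ (w - 1 - k) * P) := by
            rw [e, show a ^ (w - 1) = a ^ (w - 1 - k) * a ^ k by rw [← pow_add]; congr 1; omega]
            ring
          rw [e1]
          exact Ideal.sub_mem _ (Ideal.mul_mem_right _ _ hfA) (hlt.le (mI _).1)
      exact hβ (dext_zero_of_mem A'.homog hφ (Ideal.mul_mem_right _ _ this))
  · have : b ^ w * a ^ w ∈ A'.I := by
      apply F.sat_step A'.sat hS h0
      · apply hlt.le
        convert (mI (a ^ w)).2.1 using 1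
        ring
      · apply hlt.le
        convert (mI (b ^ w)).2.2 using 1
        ring
      · have e1 : b ^ w * a ^ w * S = f * (b ^ (w - k) * a ^ w) - c * a ^ w * (b ^ (w - k) * P) := by
          rw [e, show b ^ w = b ^ (w - k) * b ^ k by rw [← pow_add]; congr 1; omega]
          ring
        rw [e1]
        exact Ideal.sub_mem _ (Ideal.mul_mem_right _ _ hfA) (hlt.le (mI _).2.2)
    apply hα
    apply dext_zero_of_mem A'.homog hφ
    rw [show d - w = w + (d - 2 * w) by omega, pow_add, ← mul_assoc]
    exact Ideal.mul_mem_right _ _ this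
end
end

section
open MvPolynomial
section
variable {K : Type} [Field K]

theorem nu_smul (d : ℕ) (y : K) (v : Fin 3 → K) : nu (m := 2) d (y • v) = y ^ d • nu d v := by
  ext f
  exact eval_scale f.2 y v

theorem nu_ne (d : ℕ) {v : Fin 3 → K} (hv : v ≠ 0) : nu (m := 2) d v ≠ 0 := by
  obtain ⟨j, hj⟩ := Function.ne_iff.1 hv
  intro h
  have h1 := DFunLike.congr_fun h (⟨X j ^ d, hpow (isHomogeneous_X K j) d⟩ : Hd K 2 d)
  have h2 : eval v (X j ^ d : PR K 2) = 0 := h1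
  rw [map_pow, eval_X] at h2
  exact pow_ne_zero d hj h2

open Classical in
theorem span_conv1 {d : ℕ} {S : Finset (PN K 2 d)} (hS : (S : Set (PN K 2 d)) ⊆ XSet K 2 d)
    {ψ : Module.Dual K (Hd K 2 d)}
    (h : ψ ∈ Submodule.span K (Projectivization.rep '' (S : Set (PN K 2 d)))) :
    ∃ T : Finset (Pm K 2), T.card ≤ S.card ∧ ∃ l : Pm K 2 → K, ψ = ∑ t ∈ T, l t • nu d t.rep := by
  have : ∀ Q : PN K 2 d, ∃ a : Pm K 2, Q ∈ S → Q.submodule = Submodule.span K {nu d a.rep} := by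
    intro Q
    by_cases hQ : Q ∈ S
    · obtain ⟨a, ha⟩ := hS hQ
      exact ⟨a, fun _ => ha⟩
    · exact ⟨Projectivization.mk K (fun _ => 1) (by intro h; simpa using congrFun h 0), fun h => absurd h hQ⟩
  choose a ha using this
  refine ⟨S.image a, Finset.card_image_le, ?_⟩
  have h2 : ψ ∈ Submodule.span K ((fun t : Pm K 2 => nu d t.rep) '' (S.image a : Set (Pm K 2))) := by
    refine Submodule.span_le.2 ?_ h
    rintro _ ⟨Q, hQ, rfl⟩
    have h3 : Q.rep ∈ Q.submodule := by
      rw [Projectivization.submodule_eq]; exact Submodule.mem_span_singleton_self _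
    rw [ha Q hQ] at h3
    refine Submodule.span_mono ?_ h3
    rintro _ rfl
    exact ⟨a Q, by simpa using ⟨Q, hQ, rfl⟩, rfl⟩
  rw [Submodule.mem_span_image_finset_iff_exists_fun'] at h2
  obtain ⟨l, hl⟩ := h2
  exact ⟨l, hl.symm⟩

open Classical in
theorem span_conv2 {d n : ℕ} (v : Fin n → Fin 3 → K) (hv : ∀ j, v j ≠ 0)
    {ψ : Module.Dual K (Hd K 2 d)}
    (h : ψ ∈ Submodule.span K (Set.range fun j => nu (m := 2) d (v j))) :
    ∃ S : Finset (PN K 2 d), (S : Set (PN K 2 d)) ⊆ XSet K 2 d ∧ S.card ≤ n ∧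
      ψ ∈ Submodule.span K (Projectivization.rep '' (S : Set (PN K 2 d))) := by
  refine ⟨Finset.univ.image fun j => Projectivization.mk K (nu d (v j)) (nu_ne d (hv j)), ?_, ?_, ?_⟩
  · intro Q hQ
    simp only [Finset.coe_image, Finset.coe_univ, Set.image_univ, Set.mem_range] at hQ
    obtain ⟨j, rfl⟩ := hQ
    refine ⟨Projectivization.mk K (v j) (hv j), ?_⟩
    obtain ⟨y, hy⟩ := Projectivization.exists_smul_eq_mk_rep K (v j) (hv j)
    rw [Projectivization.submodule_mk, ← hy, Units.smul_def, nu_smul]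
    exact (Submodule.span_singleton_smul_eq (IsUnit.mk0 _ (pow_ne_zero _ y.ne_zero)) _).symm
  · exact Finset.card_image_le.trans (by simp)
  · refine Submodule.span_le.2 ?_ h
    rintro _ ⟨j, rfl⟩
    obtain ⟨y, hy⟩ := Projectivization.exists_smul_eq_mk_rep K _ (nu_ne d (hv j))
    have : nu d (v j) = (y⁻¹ : Kˣ) • (Projectivization.mk K (nu d (v j)) (nu_ne d (hv j))).rep := by
      rw [← hy, inv_smul_smul]
    show nu d (v j) ∈ _
    rw [this]
    refine Submodule.smul_mem _ _ (Submodule.subset_span ⟨_, ?_, rfl⟩)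
    simp

theorem sec_of {d n : ℕ} (hn : 1 ≤ n) (P : PN K 2 d)
    (h : ∀ F ∈ polyFunctions K (Module.Dual K (Hd K 2 d)),
      (∀ v : Fin n → Fin 3 → K, (∀ j, v j ≠ 0) →
        ∀ ψ ∈ Submodule.span K (Set.range fun j => nu (m := 2) d (v j)), F ψ = 0) →
      ∀ c : K, F (c • P.rep) = 0) : P ∈ secantWrt (XSet K 2 d) n := by
  intro F hF hz
  apply h F hF
  have main : ∀ v : Fin n → Fin 3 → K, (∀ j, v j ≠ 0) →
        ∀ ψ ∈ Submodule.span K (Set.range fun j => nu (m := 2) d (v j)), ψ ≠ 0 → ∀ y : K, F (y • ψ) = 0 := by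
    intro v hv ψ hψ h0 y
    obtain ⟨S, hS, hc, hm⟩ := span_conv2 v hv hψ
    obtain ⟨z, hz'⟩ := Projectivization.exists_smul_eq_mk_rep K ψ h0
    have := hz (Projectivization.mk K ψ h0) ⟨S, hS, hc, by
      rw [← hz']; exact Submodule.smul_mem _ _ hm⟩ (y * (z⁻¹ : Kˣ))
    rw [← hz', Units.smul_def, smul_smul] at this
    simpa [mul_assoc] using this
  intro v hv ψ hψ
  by_cases h0 : ψ = 0
  · have := main v hv (nu d (v ⟨0, hn⟩)) (Submodule.subset_span ⟨_, rfl⟩) (nu_ne d (hv _)) 0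
    rw [zero_smul] at this
    rw [h0, this]
  · simpa using main v hv ψ hψ h0 1

theorem of_sec {d s : ℕ} {P : PN K 2 d} (h : P ∈ secantWrt (XSet K 2 d) s)
    {F : Module.Dual K (Hd K 2 d) → K} (hF : F ∈ polyFunctions K (Module.Dual K (Hd K 2 d)))
    (h2 : ∀ (T : Finset (Pm K 2)) (l : Pm K 2 → K), T.card ≤ s → F (∑ t ∈ T, l t • nu d t.rep) = 0) :
    F P.rep = 0 := by
  have := h F hF ?_ 1
  · simpa using this
  · rintro Q ⟨S, hS, hc, hm⟩ y
    obtain ⟨T, hT, l, hl⟩ := span_conv1 hS hm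
    have := h2 T (fun t => y * l t) (hT.trans hc)
    rw [hl, Finset.smul_sum]
    simpa [smul_smul] using this
end
end

section
open MvPolynomial
section
variable {K : Type} [Field K]

theorem dext_comb {d : ℕ} (T : Finset (Pm K 2)) (l : Pm K 2 → K) {f : PR K 2} (hf : f.IsHomogeneous d) :
    dext (∑ t ∈ T, l t • nu d t.rep) f = ∑ t ∈ T, l t * eval t.rep f := by
  rw [dext_sum, LinearMap.sum_apply]
  refine Finset.sum_congr rfl fun t _ => ?_
  rw [dext_smul, LinearMap.smul_apply, dext_nu d _ hf, smul_eq_mul]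

theorem det_poly {d : ℕ} {ι : Type} [Fintype ι] [DecidableEq ι] (f g : ι → PR K 2) :
    (fun ψ : Module.Dual K (Hd K 2 d) => (Matrix.of fun i j => dext ψ (f i * g j)).det) ∈
      polyFunctions K (Module.Dual K (Hd K 2 d)) := by
  have e : (fun ψ : Module.Dual K (Hd K 2 d) => (Matrix.of fun i j => dext ψ (f i * g j)).det) =
      ∑ σ : Equiv.Perm ι, (Equiv.Perm.sign σ : ℤ) • ∏ i, fun ψ : Module.Dual K (Hd K 2 d) => dext ψ (f (σ i) * g i) := by
    funext ψ
    rw [Matrix.det_apply]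
    simp only [Finset.sum_apply, Pi.smul_apply, Finset.prod_apply, Matrix.of_apply]
    rfl
  rw [e]
  refine Subalgebra.sum_mem _ fun σ _ => Subalgebra.zsmul_mem _ (Subalgebra.prod_mem _ fun i _ => ?_) _
  refine Algebra.subset_adjoin ⟨{ toFun := fun ψ => dext ψ (f (σ i) * g i)
                                  map_add' := fun _ _ => rfl
                                  map_smul' := fun _ _ => rfl }, rfl⟩

theorem det_vanish {d e e' : ℕ} {ι : Type} [Fintype ι] [DecidableEq ι] (f g : ι → PR K 2)
    (hf : ∀ i, (f i).IsHomogeneous e) (hg : ∀ i, (g i).IsHomogeneous e') (hd : e + e' = d)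
    (T : Finset (Pm K 2)) (l : Pm K 2 → K) (hT : T.card < Fintype.card ι) :
    (Matrix.of fun i j => dext (∑ t ∈ T, l t • nu d t.rep) (f i * g j)).det = 0 := by
  rw [← Matrix.exists_vecMul_eq_zero_iff]
  let L : (ι → K) →ₗ[K] (T → K) :=
    { toFun := fun y t => ∑ i, y i * eval t.1.rep (f i)
      map_add' := by intro y z; ext t; simp [add_mul, Finset.sum_add_distrib]
      map_smul' := by intro y z; ext t; simp [mul_assoc, Finset.mul_sum] }
  have hk : LinearMap.ker L ≠ ⊥ := LinearMap.ker_ne_bot_of_finrank_lt (by simpa using hT)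
  obtain ⟨y, hy, hy0⟩ := Submodule.exists_mem_ne_zero_of_ne_bot hk
  refine ⟨y, hy0, ?_⟩
  funext j
  simp only [Matrix.vecMul, dotProduct, Matrix.of_apply, Pi.zero_apply]
  have h1 : ∀ i, dext (∑ t ∈ T, l t • nu d t.rep) (f i * g j) =
      ∑ t ∈ T, l t * (eval t.rep (f i) * eval t.rep (g j)) := by
    intro i
    rw [dext_comb T l (by rw [← hd]; exact (hf i).mul (hg j))]
    simp only [map_mul]
  simp only [h1, Finset.mul_sum]
  rw [Finset.sum_comm]
  refine Finset.sum_eq_zero fun t ht => ?_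
  have h2 : ∑ i, y i * eval t.rep (f i) = 0 := congrFun hy ⟨t, ht⟩
  have : ∀ i, y i * (l t * (eval t.rep (f i) * eval t.rep (g j))) =
      (l t * eval t.rep (g j)) * (y i * eval t.rep (f i)) := fun i => by ring
  rw [Finset.sum_congr rfl fun i _ => this i, ← Finset.mul_sum, h2, mul_zero]

variable {v u x : Fin 3 → K} {a b c : PR K 2} {w d : ℕ}

theorem br_lower (F : TFrame v u x a b c) (hw : 1 ≤ w) (hd : 4 * w + 1 ≤ d) {P : PN K 2 d}
    (H : Core a b c w d (dext P.rep)) (hα : dext P.rep (b ^ w * a ^ (d - w)) ≠ 0)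
    (hβ : dext P.rep (c * a ^ (w - 1) * c ^ (d - w)) ≠ 0) {s : ℕ}
    (hs : P ∈ secantWrt (XSet K 2 d) s) : 2 * w + 1 ≤ s := by
  by_contra hlt
  have hlt : s < 2 * w + 1 := by omega
  let f : Fin (w+1) ⊕ Fin w → PR K 2 := Sum.elim (fun i => b ^ i.val * a ^ (2 * w - i.val))
    (fun j => c ^ (2 * w - j.val) * a ^ j.val)
  let g : Fin (w+1) ⊕ Fin w → PR K 2 := Sum.elim (fun i => b ^ (w - i.val) * a ^ (d - 3 * w + i.val))
    (fun j => a ^ (w - 1 - j.val) * c ^ (d - 3 * w + 1 + j.val))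
  have hf : ∀ i, (f i).IsHomogeneous (2 * w) := by
    rintro (i | j)
    · have := (hpow F.hq i.val).mul (hpow F.hp (2 * w - i.val))
      rwa [show i.val + (2 * w - i.val) = 2 * w by omega] at this
    · have := (hpow F.hr (2 * w - j.val)).mul (hpow F.hp j.val)
      rwa [show (2 * w - j.val) + j.val = 2 * w by omega] at this
  have hg : ∀ i, (g i).IsHomogeneous (d - 2 * w) := by
    rintro (i | j)
    · have := (hpow F.hq (w - i.val)).mul (hpow F.hp (d - 3 * w + i.val))
      rwa [show (w - i.val) + (d - 3 * w + i.val) = d - 2 * w by omega] at this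
    · have := (hpow F.hp (w - 1 - j.val)).mul (hpow F.hr (d - 3 * w + 1 + j.val))
      rwa [show (w - 1 - j.val) + (d - 3 * w + 1 + j.val) = d - 2 * w by omega] at this
  have hdet := of_sec hs (det_poly f g) (fun T l hT => det_vanish f g hf hg (by omega) T l (by
    simp only [Fintype.card_sum, Fintype.card_fin]; omega))
  set M : Matrix (Fin (w+1) ⊕ Fin w) (Fin (w+1) ⊕ Fin w) K := Matrix.of fun i j => dext P.rep (f i * g j) with hM
  change M.det = 0 at hdet
  have z21 : M.toBlocks₂₁ = 0 := by
    ext j i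
    show dext P.rep ((c ^ (2 * w - j.val) * a ^ j.val) * (b ^ (w - i.val) * a ^ (d - 3 * w + i.val))) = 0
    have hj := j.2
    have hi := i.2
    obtain ⟨k, hk⟩ : ∃ k, 2 * w - j.val = k + 1 := ⟨2 * w - j.val - 1, by omega⟩
    rw [hk]
    by_cases h : i.val = w
    · rw [show d - 3 * w + i.val = w + (d - 3 * w) by omega, h, Nat.sub_self]
      convert H.ca (c ^ k * a ^ j.val * a ^ (d - 3 * w)) using 2
      ring
    · obtain ⟨k', hk'⟩ : ∃ k', w - i.val = k' + 1 := ⟨w - i.val - 1, by omega⟩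
      rw [hk']
      convert H.bc (c ^ k * a ^ j.val * b ^ k' * a ^ (d - 3 * w + i.val)) using 2
      ring
  rw [← Matrix.fromBlocks_toBlocks M, z21, Matrix.det_fromBlocks_zero₂₁, Matrix.det_of_isUpperTriangular,
    Matrix.det_of_isUpperTriangular] at hdet
  · rcases mul_eq_zero.1 hdet with h | h
    · obtain ⟨i, _, hi⟩ := Finset.prod_eq_zero_iff.1 h
      apply hα
      rw [← hi]
      show _ = dext P.rep ((b ^ i.val * a ^ (2 * w - i.val)) * (b ^ (w - i.val) * a ^ (d - 3 * w + i.val)))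
      have hi := i.2
      congr 1
      rw [show (b ^ i.val * a ^ (2 * w - i.val)) * (b ^ (w - i.val) * a ^ (d - 3 * w + i.val)) =
        b ^ (i.val + (w - i.val)) * a ^ ((2 * w - i.val) + (d - 3 * w + i.val)) by ring]
      congr 2 <;> omega
    · obtain ⟨j, _, hj⟩ := Finset.prod_eq_zero_iff.1 h
      apply hβ
      rw [← hj]
      show _ = dext P.rep ((c ^ (2 * w - j.val) * a ^ j.val) * (a ^ (w - 1 - j.val) * c ^ (d - 3 * w + 1 + j.val)))
      have hj := j.2
      congr 1
      rw [show (c ^ (2 * w - j.val) * a ^ j.val) * (a ^ (w - 1 - j.val) * c ^ (d - 3 * w + 1 + j.val)) =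
        a ^ (j.val + (w - 1 - j.val)) * c ^ ((2 * w - j.val) + (d - 3 * w + 1 + j.val)) by ring,
        show c * a ^ (w - 1) * c ^ (d - w) = a ^ (w - 1) * c ^ (d - w + 1) by ring]
      congr 2 <;> omega
  · intro j j' hjj
    have hjj : j'.val < j.val := hjj
    have hj := j.2
    show dext P.rep ((c ^ (2 * w - j.val) * a ^ j.val) * (a ^ (w - 1 - j'.val) * c ^ (d - 3 * w + 1 + j'.val))) = 0
    obtain ⟨k, hk⟩ : ∃ k, j.val + (w - 1 - j'.val) = w + k := ⟨j.val - 1 - j'.val, by omega⟩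
    convert H.ca (a ^ k * (c ^ (2 * w - j.val) * c ^ (d - 3 * w + j'.val))) using 2
    rw [show (c ^ (2 * w - j.val) * a ^ j.val) * (a ^ (w - 1 - j'.val) * c ^ (d - 3 * w + 1 + j'.val)) =
      a ^ (j.val + (w - 1 - j'.val)) * (c * (c ^ (2 * w - j.val) * c ^ (d - 3 * w + j'.val))) by ring, hk]
    ring
  · intro i i' hii
    have hii : i'.val < i.val := hii
    have hi := i.2
    show dext P.rep ((b ^ i.val * a ^ (2 * w - i.val)) * (b ^ (w - i'.val) * a ^ (d - 3 * w + i'.val))) = 0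
    obtain ⟨k, hk⟩ : ∃ k, i.val + (w - i'.val) = (w + 1) + k := ⟨i.val - i'.val - 1, by omega⟩
    convert H.bw (b ^ k * (a ^ (2 * w - i.val) * a ^ (d - 3 * w + i'.val))) using 2
    rw [show (b ^ i.val * a ^ (2 * w - i.val)) * (b ^ (w - i'.val) * a ^ (d - 3 * w + i'.val)) =
      b ^ (i.val + (w - i'.val)) * (a ^ (2 * w - i.val) * a ^ (d - 3 * w + i'.val)) by ring, hk]
    ring
end
end

section
open MvPolynomial
section
variable {K : Type} [Field K]

theorem rho_natDegree (v u : Fin 3 → K) {f : PR K 2} {d : ℕ} (hf : f.IsHomogeneous d) :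
    (rho v u f).natDegree ≤ d := by
  have := aeval_natDegree_le (m := d) (n := 1) f hf.totalDegree_le
    (fun j => Polynomial.C (v j) + Polynomial.X * Polynomial.C (u j)) (by
      intro i; rw [add_comm, mul_comm]; exact Polynomial.natDegree_linear_le)
  rwa [mul_one] at this

/-- coefficient functional -/
noncomputable def Dco (d : ℕ) (v u : Fin 3 → K) (i : ℕ) : Module.Dual K (Hd K 2 d) :=
  (Polynomial.lcoeff K i) ∘ₗ (rho v u).toLinearMap ∘ₗ (Hd K 2 d).subtype

theorem Dco_apply (d : ℕ) (v u : Fin 3 → K) (i : ℕ) (f : Hd K 2 d) :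
    Dco d v u i f = (rho v u f.1).coeff i := rfl

theorem nu_eq_sum (d : ℕ) (v u : Fin 3 → K) (t : K) :
    nu (m := 2) d (v + t • u) = ∑ i ∈ Finset.range (d + 1), t ^ i • Dco d v u i := by
  ext f
  rw [LinearMap.sum_apply]
  have h1 : nu (m := 2) d (v + t • u) f = (rho v u f.1).eval t := (rho_eval v u f.1 t).symm
  rw [h1, Polynomial.eval_eq_sum_range' (n := d + 1) (Nat.lt_succ_of_le (rho_natDegree v u f.2))]
  refine Finset.sum_congr rfl fun i _ => ?_
  rw [LinearMap.smul_apply, Dco_apply, smul_eq_mul, mul_comm]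

/-- polynomial curves in a vector space -/
def IsPolyCurve {V : Type} [AddCommGroup V] [Module K V] (ψ : K → V) : Prop :=
  ∀ L : V →ₗ[K] K, ∃ p : Polynomial K, ∀ t, L (ψ t) = p.eval t

theorem IsPolyCurve.add {V : Type} [AddCommGroup V] [Module K V] {ψ χ : K → V} (h1 : IsPolyCurve ψ)
    (h2 : IsPolyCurve χ) : IsPolyCurve (fun t => ψ t + χ t) := by
  intro L
  obtain ⟨p, hp⟩ := h1 L
  obtain ⟨q, hq⟩ := h2 L
  exact ⟨p + q, fun t => by simp [hp, hq]⟩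

theorem isPolyCurve_sum {V : Type} [AddCommGroup V] [Module K V] (s : Finset ℕ) (p : ℕ → Polynomial K)
    (D : ℕ → V) : IsPolyCurve (fun t => ∑ i ∈ s, (p i).eval t • D i) := by
  intro L
  refine ⟨∑ i ∈ s, p i * Polynomial.C (L (D i)), fun t => ?_⟩
  simp [Polynomial.eval_finsetSum]

theorem IsPolyCurve.poly {V : Type} [AddCommGroup V] [Module K V] {ψ : K → V} (h : IsPolyCurve ψ)
    {F : V → K} (hF : F ∈ polyFunctions K V) : ∃ p : Polynomial K, ∀ t, F (ψ t) = p.eval t := by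
  unfold polyFunctions at hF
  induction hF using Algebra.adjoin_induction with
  | mem y hy => obtain ⟨L, rfl⟩ := hy; exact h L
  | algebraMap y => exact ⟨Polynomial.C y, fun t => by simp⟩
  | add y z _ _ hy hz =>
    obtain ⟨p, hp⟩ := hy
    obtain ⟨q, hq⟩ := hz
    exact ⟨p + q, fun t => by simp [hp, hq]⟩
  | mul y z _ _ hy hz =>
    obtain ⟨p, hp⟩ := hy
    obtain ⟨q, hq⟩ := hz
    exact ⟨p * q, fun t => by simp [hp, hq]⟩

theorem IsPolyCurve.vanish [CharZero K] {V : Type} [AddCommGroup V] [Module K V] {ψ : K → V} (h : IsPolyCurve ψ)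
    {F : V → K} (hF : F ∈ polyFunctions K V) (h0 : ∀ t ≠ 0, F (ψ t) = 0) : F (ψ 0) = 0 := by
  obtain ⟨p, hp⟩ := h.poly hF
  have : Polynomial.X * p = 0 := by
    apply Polynomial.funext
    intro t
    by_cases ht : t = 0
    · simp [ht]
    · simp [← hp, h0 t ht]
  have hp0 : p = 0 := (mul_eq_zero.1 this).resolve_left Polynomial.X_ne_zero
  rw [hp, hp0]; simp

theorem curve_exists [CharZero K] (d n : ℕ) (hn : n ≤ d + 1) (v u : Fin 3 → K)
    (hvu : ∀ t : K, v + t • u ≠ 0) (α : ℕ → K) :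
    ∃ ψ : K → Module.Dual K (Hd K 2 d), IsPolyCurve ψ ∧
      ψ 0 = ∑ i ∈ Finset.range n, α i • Dco d v u i ∧
      ∀ t ≠ 0, ∃ pt : Fin n → Fin 3 → K, (∀ j, pt j ≠ 0) ∧
        ψ t ∈ Submodule.span K (Set.range fun j => nu (m := 2) d (pt j)) := by
  let s : Fin n → K := fun j => (j.val : K)
  have hs : Function.Injective s := by
    intro i j h
    exact Fin.ext (Nat.cast_injective h)
  have hdet := Matrix.det_vandermonde_ne_zero_iff.2 hs
  let W := (Matrix.vandermonde s)⁻¹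
  have hW : W * Matrix.vandermonde s = 1 := Matrix.nonsing_inv_mul _ (IsUnit.mk0 _ hdet)
  let y : ℕ → Fin n → K := fun i k => ∑ j, W k j * s j ^ i
  have hy : ∀ (i k : Fin n), y i.val k = if k = i then 1 else 0 := by
    intro i k
    have := congrFun (congrFun hW k) i
    rw [Matrix.mul_apply, Matrix.one_apply] at this
    exact this
  let p : ℕ → Polynomial K := fun i => ∑ k : Fin n, Polynomial.C (α k.val * y i k) * Polynomial.X ^ (i - k.val)
  refine ⟨fun t => ∑ i ∈ Finset.range (d + 1), (p i).eval t • Dco d v u i, isPolyCurve_sum _ _ _, ?_, ?_⟩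
  · have h1 : ∀ i < n, (p i).eval 0 = α i := by
      intro i hi
      simp only [p, Polynomial.eval_finsetSum, Polynomial.eval_mul, Polynomial.eval_C,
        Polynomial.eval_pow, Polynomial.eval_X]
      rw [Finset.sum_eq_single ⟨i, hi⟩]
      · have := hy ⟨i, hi⟩ ⟨i, hi⟩
        simp only [if_true] at this
        rw [this]; simp
      · intro k _ hk
        have := hy ⟨i, hi⟩ k
        rw [if_neg hk] at this
        rw [this]; simp
      · simp
    have h2 : ∀ i, n ≤ i → (p i).eval 0 = 0 := by
      intro i hi
      simp only [p, Polynomial.eval_finsetSum, Polynomial.eval_mul, Polynomial.eval_C,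
        Polynomial.eval_pow, Polynomial.eval_X]
      refine Finset.sum_eq_zero fun k _ => ?_
      rw [zero_pow (by have := k.2; omega), mul_zero]
    show ∑ i ∈ Finset.range (d + 1), (p i).eval 0 • Dco d v u i = _
    rw [← Finset.sum_subset (Finset.range_subset_range.2 hn)]
    · refine Finset.sum_congr rfl fun i hi => ?_
      rw [h1 i (Finset.mem_range.1 hi)]
    · intro i _ hi
      rw [h2 i (by simpa using hi), zero_smul]
  · intro t ht
    refine ⟨fun j => v + (t * s j) • u, fun j => hvu _, ?_⟩
    rw [Submodule.mem_span_range_iff_exists_fun]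
    refine ⟨fun j => ∑ k : Fin n, α k.val * W k j * (t⁻¹) ^ k.val, ?_⟩
    simp only [nu_eq_sum, Finset.smul_sum]
    rw [Finset.sum_comm]
    refine Finset.sum_congr rfl fun i _ => ?_
    simp only [smul_smul]
    rw [← Finset.sum_smul]
    congr 1
    simp only [p, Polynomial.eval_finsetSum, Polynomial.eval_mul, Polynomial.eval_C,
        Polynomial.eval_pow, Polynomial.eval_X, Finset.sum_mul]
    rw [Finset.sum_comm]
    refine Finset.sum_congr rfl fun k _ => ?_
    by_cases hik : k.val ≤ i
    · simp only [y, Finset.mul_sum, Finset.sum_mul]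
      refine Finset.sum_congr rfl fun j _ => ?_
      obtain ⟨l, rfl⟩ := Nat.exists_eq_add_of_le hik
      rw [Nat.add_sub_cancel_left, mul_pow, inv_pow]
      field_simp
      ring
    · have h0 : y i k = 0 := by
        have := hy ⟨i, by have := k.2; omega⟩ k
        rw [if_neg (by intro h; apply hik; rw [h])] at this
        exact this
      have : ∀ j, α k.val * W k j * (t⁻¹) ^ k.val * (t * s j) ^ i = (α k.val * (t⁻¹) ^ k.val * t ^ i) * (W k j * s j ^ i) := by
        intro j; ring
      rw [Finset.sum_congr rfl fun j _ => this j, ← Finset.mul_sum]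
      change _ * y i k = _
      rw [h0]; simp

variable {v u x : Fin 3 → K} {a b c : PR K 2} {w d : ℕ}

theorem TFrame.ne_vu (F : TFrame v u x a b c) (t : K) : v + t • u ≠ 0 := by
  intro h
  have h1 := rho_eval v u a t
  rw [F.rp, h] at h1
  have h2 := eval_scale F.hp 0 (0 : Fin 3 → K)
  simp at h2 h1
  rw [h2] at h1
  exact one_ne_zero h1

theorem br_upper_gen [CharZero K] (F : TFrame v u x a b c) {n1 n2 : ℕ} (h1 : n1 ≤ d + 1) (h2 : n2 ≤ d + 1)
    (h0 : 1 ≤ n1) {P : PN K 2 d} (α β : ℕ → K)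
    (hP : P.rep = ∑ i ∈ Finset.range n1, α i • Dco d v u i + ∑ i ∈ Finset.range n2, β i • Dco d x v i) :
    P ∈ secantWrt (XSet K 2 d) (n1 + n2) := by
  apply sec_of (by omega)
  intro G hG hz y
  obtain ⟨ψ, hψ, hψ0, hψt⟩ := curve_exists d n1 h1 v u F.ne_vu (fun i => y * α i)
  obtain ⟨χ, hχ, hχ0, hχt⟩ := curve_exists d n2 h2 x v F.rot.ne_vu (fun i => y * β i)
  have e : y • P.rep = ψ 0 + χ 0 := by
    rw [hP, hψ0, hχ0, smul_add, Finset.smul_sum, Finset.smul_sum]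
    simp only [smul_smul]
  rw [e]
  apply (hψ.add hχ).vanish hG
  intro t ht
  obtain ⟨p1, hp1, hm1⟩ := hψt t ht
  obtain ⟨p2, hp2, hm2⟩ := hχt t ht
  refine hz (Fin.append p1 p2) ?_ _ (Submodule.add_mem _ ?_ ?_)
  · intro j
    induction j using Fin.addCases with
    | left i => rw [Fin.append_left]; exact hp1 i
    | right i => rw [Fin.append_right]; exact hp2 i
  · refine Submodule.span_mono ?_ hm1
    rintro _ ⟨j, rfl⟩
    exact ⟨Fin.castAdd n2 j, by simp only [Fin.append_left]⟩
  · refine Submodule.span_mono ?_ hm2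
    rintro _ ⟨j, rfl⟩
    exact ⟨Fin.natAdd n1 j, by simp only [Fin.append_right]⟩

theorem rep_expand (F : TFrame v u x a b c) (hw : 1 ≤ w) (hd : 2 * w ≤ d) {φ : Module.Dual K (Hd K 2 d)}
    (h : φ ∈ schemeSpanSub (Ideal.span {c, b ^ (w + 1)} ⊓ Ideal.span {b, a ^ w}) d) :
    φ = ∑ i ∈ Finset.range (w + 1), dext φ (b ^ i * a ^ (d - i)) • Dco d v u i +
      ∑ j ∈ Finset.range w, dext φ (c ^ (d - j) * a ^ j) • Dco d x v j := by
  ext f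
  rw [LinearMap.add_apply, LinearMap.sum_apply, LinearMap.sum_apply]
  simp only [LinearMap.smul_apply, Dco_apply, smul_eq_mul]
  have hb : ∀ i ∈ Finset.range (w + 1), (b ^ i * a ^ (d - i)).IsHomogeneous d := by
    intro i hi
    have := (hpow F.hq i).mul (hpow F.hp (d - i))
    rwa [show i + (d - i) = d by have := Finset.mem_range.1 hi; omega] at this
  have hc : ∀ j ∈ Finset.range w, (c ^ (d - j) * a ^ j).IsHomogeneous d := by
    intro i hi
    have := (hpow F.hr (d - i)).mul (hpow F.hp i)
    rwa [show (d - i) + i = d by have := Finset.mem_range.1 hi; omega] at this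
  set A : PR K 2 := ∑ i ∈ Finset.range (w + 1), (rho v u f.1).coeff i • (b ^ i * a ^ (d - i)) with hA
  set B : PR K 2 := ∑ j ∈ Finset.range w, (rho x v f.1).coeff j • (c ^ (d - j) * a ^ j) with hB
  have hAh : A.IsHomogeneous d := (homogeneousSubmodule (Fin 3) K d).sum_mem fun i hi =>
    (homogeneousSubmodule (Fin 3) K d).smul_mem _ (hb i hi)
  have hBh : B.IsHomogeneous d := (homogeneousSubmodule (Fin 3) K d).sum_mem fun i hi =>
    (homogeneousSubmodule (Fin 3) K d).smul_mem _ (hc i hi)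
  have hgh : (f.1 - A - B).IsHomogeneous d := (homogeneousSubmodule (Fin 3) K d).sub_mem
    ((homogeneousSubmodule (Fin 3) K d).sub_mem f.2 hAh) hBh
  have rA : rho v u A = ∑ i ∈ Finset.range (w + 1), (rho v u f.1).coeff i • Polynomial.X ^ i := by
    rw [hA, map_sum]
    refine Finset.sum_congr rfl fun i _ => ?_
    rw [map_smul, map_mul, map_pow, map_pow, F.rp, F.rq]; simp
  have rB : rho v u B = 0 := by
    rw [hB, map_sum]
    refine Finset.sum_eq_zero fun i hi => ?_
    rw [map_smul, map_mul, map_pow, map_pow, F.rr, zero_pow (by have := Finset.mem_range.1 hi; omega)]; simp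
  have rB' : rho x v B = ∑ i ∈ Finset.range w, (rho x v f.1).coeff i • Polynomial.X ^ i := by
    rw [hB, map_sum]
    refine Finset.sum_congr rfl fun i _ => ?_
    rw [map_smul, map_mul, map_pow, map_pow, F.rot.rp, F.rot.rq]; simp
  have rA' : ∀ j < w, (rho x v A).coeff j = 0 := by
    intro j hj
    rw [hA, map_sum, Polynomial.finsetSum_coeff]
    refine Finset.sum_eq_zero fun i hi => ?_
    rw [map_smul, map_mul, map_pow, map_pow, F.rot.rr, F.rot.rq]
    by_cases hi0 : i = 0
    · subst hi0
      rw [Polynomial.coeff_smul, pow_zero, one_mul, Polynomial.coeff_X_pow, if_neg (by omega), smul_zero]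
    · rw [zero_pow hi0]; simp
  have hmem : f.1 - A - B ∈ Ideal.span {c, b ^ (w + 1)} ⊓ Ideal.span {b, a ^ w} := by
    constructor
    · apply F.mem_of_coeff hgh
      intro i hi
      rw [map_sub, map_sub, rA, rB, sub_zero, Polynomial.coeff_sub, Polynomial.finsetSum_coeff]
      simp only [Polynomial.coeff_smul, Polynomial.coeff_X_pow, smul_eq_mul]
      rw [Finset.sum_eq_single i]
      · simp
      · intro j _ hj; rw [if_neg (Ne.symm hj), mul_zero]
      · intro h; exact absurd (Finset.mem_range.2 hi) h
    · apply F.rot.mem_of_coeff hgh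
      intro i hi
      rw [map_sub, map_sub, rB', Polynomial.coeff_sub, Polynomial.coeff_sub, rA' i hi, Polynomial.finsetSum_coeff]
      simp only [Polynomial.coeff_smul, Polynomial.coeff_X_pow, smul_eq_mul]
      rw [Finset.sum_eq_single i]
      · simp
      · intro j _ hj; rw [if_neg (Ne.symm hj), mul_zero]
      · intro h; exact absurd (Finset.mem_range.2 hi) h
  have h1 := dext_zero_of_mem (homogI_inf (F.homogI _) (F.rot.homogI _)) h hmem
  rw [map_sub, map_sub, dext_hom φ f.2, hA, hB, map_sum, map_sum] at h1
  simp only [map_smul, smul_eq_mul] at h1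
  have h2 : φ f = ∑ i ∈ Finset.range (w + 1), (rho v u f.1).coeff i * dext φ (b ^ i * a ^ (d - i)) +
    ∑ j ∈ Finset.range w, (rho x v f.1).coeff j * dext φ (c ^ (d - j) * a ^ j) := by
    linear_combination h1
  rw [h2]
  congr 1 <;> exact Finset.sum_congr rfl fun i _ => mul_comm _ _

theorem srank_nonempty [CharZero K] (F : TFrame v u x a b c) (P : PN K 2 d) (α β : ℕ → K)
    {n1 n2 : ℕ} (h1 : n1 ≤ d + 1) (h2 : n2 ≤ d + 1)
    (hP : P.rep = ∑ i ∈ Finset.range n1, α i • Dco d v u i + ∑ i ∈ Finset.range n2, β i • Dco d x v i) :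
    ∃ S : Finset (PN K 2 d), (S : Set (PN K 2 d)) ⊆ XSet K 2 d ∧
      P.rep ∈ Submodule.span K (Projectivization.rep '' (S : Set (PN K 2 d))) := by
  have key : ∀ (v u : Fin 3 → K), (∀ t : K, v + t • u ≠ 0) → ∀ n ≤ d + 1, ∀ α : ℕ → K,
      ∃ pt : Fin (d + 1) → Fin 3 → K, (∀ j, pt j ≠ 0) ∧
        ∑ i ∈ Finset.range n, α i • Dco d v u i ∈ Submodule.span K (Set.range fun j => nu (m := 2) d (pt j)) := by
    intro v u hvu n hn α
    obtain ⟨W, hW⟩ : ∃ W : Matrix (Fin (d+1)) (Fin (d+1)) K, W * Matrix.vandermonde (fun j => (j.val : K)) = 1 := by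
      refine ⟨_, Matrix.nonsing_inv_mul _ (IsUnit.mk0 _ (Matrix.det_vandermonde_ne_zero_iff.2 ?_))⟩
      intro i j h
      exact Fin.ext (Nat.cast_injective h)
    refine ⟨fun j => v + (j.val : K) • u, fun j => hvu _, Submodule.sum_mem _ fun i hi => Submodule.smul_mem _ _ ?_⟩
    rw [Submodule.mem_span_range_iff_exists_fun]
    have hid : i < d + 1 := lt_of_lt_of_le (Finset.mem_range.1 hi) hn
    refine ⟨fun j => W ⟨i, hid⟩ j, ?_⟩
    simp only [nu_eq_sum, Finset.smul_sum]
    rw [Finset.sum_comm, Finset.sum_range]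
    simp only [smul_smul, ← Finset.sum_smul]
    have : ∀ k : Fin (d+1), ∑ j : Fin (d+1), W ⟨i, hid⟩ j * (j.val : K) ^ k.val = if (⟨i, hid⟩ : Fin (d+1)) = k then 1 else 0 := by
      intro k
      have := congrFun (congrFun hW ⟨i, hid⟩) k
      rw [Matrix.mul_apply, Matrix.one_apply] at this
      exact this
    simp only [this, ite_smul, one_smul, zero_smul, Finset.sum_ite_eq, Finset.mem_univ, if_true]
  obtain ⟨p1, hp1, hm1⟩ := key v u F.ne_vu n1 h1 α
  obtain ⟨p2, hp2, hm2⟩ := key x v F.rot.ne_vu n2 h2 β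
  classical
  obtain ⟨S1, hS1, _, hs1⟩ := span_conv2 p1 hp1 hm1
  obtain ⟨S2, hS2, _, hs2⟩ := span_conv2 p2 hp2 hm2
  refine ⟨S1 ∪ S2, ?_, ?_⟩
  · rw [Finset.coe_union]; exact Set.union_subset hS1 hS2
  · rw [hP, Finset.coe_union, Set.image_union]
    exact Submodule.add_mem _ (Submodule.span_mono Set.subset_union_left hs1)
      (Submodule.span_mono Set.subset_union_right hs2)
end
end

section
open MvPolynomial
section
variable {K : Type} [Field K]

theorem sep_two {s q : Pm K 2} (h : s ≠ q) :
    ∃ l : PR K 2, l.IsHomogeneous 1 ∧ eval s.rep l = 0 ∧ eval q.rep l ≠ 0 := by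
  obtain ⟨i, hi⟩ := Function.ne_iff.1 s.rep_nonzero
  by_contra hcon
  push Not at hcon
  have key : ∀ j, s.rep i * q.rep j = s.rep j * q.rep i := by
    intro j
    have h1 := hcon (C (s.rep i) * X j - C (s.rep j) * X i)
      ((homogeneousSubmodule (Fin 3) K 1).sub_mem (isHomogeneous_C_mul_X _ _) (isHomogeneous_C_mul_X _ _))
      (by simp; ring)
    simp at h1
    linear_combination h1
  apply h
  rw [← s.mk_rep, ← q.mk_rep, eq_comm, Projectivization.mk_eq_mk_iff']
  refine ⟨q.rep i / s.rep i, ?_⟩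
  funext j
  have hi' : s.rep i ≠ 0 := hi
  simp only [Pi.smul_apply, smul_eq_mul]
  field_simp
  linear_combination -key j

theorem sep_many (T : Finset (Pm K 2)) {q : Pm K 2} (hq : q ∉ T) {n : ℕ} (hn : T.card ≤ n) :
    ∃ h : PR K 2, h.IsHomogeneous n ∧ (∀ s ∈ T, eval s.rep h = 0) ∧ eval q.rep h ≠ 0 := by
  classical
  induction T using Finset.induction_on generalizing n with
  | empty =>
    obtain ⟨i, hi⟩ := Function.ne_iff.1 q.rep_nonzero
    exact ⟨X i ^ n, hpow (isHomogeneous_X K i) n, by simp, by simpa using pow_ne_zero n hi⟩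
  | insert s T hs ih =>
    rw [Finset.card_insert_of_notMem hs] at hn
    rw [Finset.mem_insert, not_or] at hq
    obtain ⟨h, hh, hz, h0⟩ := ih hq.2 (n := n - 1) (by omega)
    obtain ⟨l, hl, hls, hlq⟩ := sep_two (Ne.symm hq.1)
    refine ⟨l * h, ?_, ?_, ?_⟩
    · have := hl.mul hh
      rwa [show 1 + (n - 1) = n by omega] at this
    · intro t ht
      rw [map_mul]
      rcases Finset.mem_insert.1 ht with rfl | ht
      · rw [hls, zero_mul]
      · rw [hz t ht, mul_zero]
    · rw [map_mul]; exact mul_ne_zero hlq h0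

theorem rel_card {T : Finset (Pm K 2)} {μ : Pm K 2 → K} {e : ℕ} (hT : T.Nonempty)
    (hμ : ∀ s ∈ T, μ s ≠ 0)
    (h : ∀ g : PR K 2, g.IsHomogeneous e → ∑ s ∈ T, μ s * eval s.rep g = 0) : e + 2 ≤ T.card := by
  classical
  by_contra hlt
  obtain ⟨q, hq⟩ := hT
  obtain ⟨g, hg, hz, h0⟩ := sep_many (T.erase q) (Finset.notMem_erase q T) (n := e) (by
    rw [Finset.card_erase_of_mem hq]; omega)
  have := h g hg
  rw [← Finset.add_sum_erase T _ hq, Finset.sum_eq_zero, add_zero] at this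
  · exact mul_ne_zero (hμ q hq) h0 this
  · intro s hs; rw [hz s hs, mul_zero]

open Classical in
theorem rel_res {T : Finset (Pm K 2)} {μ : Pm K 2 → K} {e k : ℕ} {l : PR K 2} (hl : l.IsHomogeneous k)
    (h : ∀ g : PR K 2, g.IsHomogeneous (k + e) → ∑ s ∈ T, μ s * eval s.rep g = 0) :
    ∀ g : PR K 2, g.IsHomogeneous e →
      ∑ s ∈ T.filter (fun s => eval s.rep l ≠ 0), (μ s * eval s.rep l) * eval s.rep g = 0 := by
  intro g hg
  refine Eq.trans ?_ (h (l * g) (hl.mul hg))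
  rw [Finset.sum_filter]
  refine Finset.sum_congr rfl fun s _ => ?_
  split_ifs with h1
  · rw [map_mul]; ring
  · push Not at h1
    rw [map_mul, h1]; simp

theorem line_through (p q : Fin 3 → K) : ∃ l : PR K 2, l ≠ 0 ∧ l.IsHomogeneous 1 ∧ eval p l = 0 ∧ eval q l = 0 := by
  let L : (Fin 3 → K) →ₗ[K] (Fin 2 → K) :=
    { toFun := fun y => ![∑ j, y j * p j, ∑ j, y j * q j]
      map_add' := by intro y z; ext i; fin_cases i <;> simp [add_mul, Finset.sum_add_distrib]
      map_smul' := by intro y z; ext i; fin_cases i <;> simp [mul_assoc, Finset.mul_sum] }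
  have hk : LinearMap.ker L ≠ ⊥ := LinearMap.ker_ne_bot_of_finrank_lt (by simp)
  obtain ⟨y, hy, hy0⟩ := Submodule.exists_mem_ne_zero_of_ne_bot hk
  refine ⟨∑ j, C (y j) * X j, ?_, IsHomogeneous.sum _ _ _ fun j _ => isHomogeneous_C_mul_X _ _, ?_, ?_⟩
  · intro h
    apply hy0
    funext i
    have := congrArg (eval (Pi.single i (1 : K) : Fin 3 → K)) h
    simpa [Pi.single_apply] using this
  · simpa [L] using congrFun hy 0
  · simpa [L] using congrFun hy 1

open Classical in
theorem rel_line (e : ℕ) : ∀ {T : Finset (Pm K 2)} {μ : Pm K 2 → K}, T.Nonempty →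
    (∀ s ∈ T, μ s ≠ 0) →
    (∀ g : PR K 2, g.IsHomogeneous e → ∑ s ∈ T, μ s * eval s.rep g = 0) →
    2 * e + 2 ≤ T.card ∨ ∃ l : PR K 2, l ≠ 0 ∧ l.IsHomogeneous 1 ∧
      e + 2 ≤ (T.filter (fun s => eval s.rep l = 0)).card := by
  induction e with
  | zero =>
    intro T μ hT hμ h
    left
    have := rel_card hT hμ h
    omega
  | succ e ih =>
    intro T μ hT hμ h
    have hc := rel_card hT hμ h
    have h' : ∀ g : PR K 2, g.IsHomogeneous (1 + e) → ∑ s ∈ T, μ s * eval s.rep g = 0 := by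
      intro g hg; exact h g (by rwa [show e + 1 = 1 + e by omega])
    have allon : ∀ l : PR K 2, ¬ (T.filter (fun s => eval s.rep l ≠ 0)).Nonempty →
        T.filter (fun s => eval s.rep l = 0) = T := by
      intro l hl
      rw [Finset.not_nonempty_iff_eq_empty] at hl
      apply Finset.filter_true_of_mem
      intro s hs
      by_contra h0
      have : s ∈ (∅ : Finset (Pm K 2)) := by rw [← hl]; exact Finset.mem_filter.2 ⟨hs, h0⟩
      simp at this
    have hres : ∀ l : PR K 2, ∀ s ∈ T.filter (fun s => eval s.rep l ≠ 0), μ s * eval s.rep l ≠ 0 := by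
      intro l s hs
      rw [Finset.mem_filter] at hs
      exact mul_ne_zero (hμ s hs.1) hs.2
    obtain ⟨t1, ht1, t2, ht2, hne⟩ := Finset.one_lt_card.1 (show 1 < T.card by omega)
    obtain ⟨l, hl0, hl, hl1, hl2⟩ := line_through t1.rep t2.rep
    have split : ∀ l : PR K 2, (T.filter (fun s => eval s.rep l = 0)).card +
      (T.filter (fun s => eval s.rep l ≠ 0)).card = T.card := fun l =>
      Finset.card_filter_add_card_filter_not _
    by_cases hN : (T.filter (fun s => eval s.rep l ≠ 0)).Nonempty
    · rcases ih hN (hres l) (rel_res hl h') with h1 | ⟨l', hl0', hl', h1⟩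
      · left
        have h2 : 1 < (T.filter (fun s => eval s.rep l = 0)).card :=
          Finset.one_lt_card.2 ⟨t1, Finset.mem_filter.2 ⟨ht1, hl1⟩, t2, Finset.mem_filter.2 ⟨ht2, hl2⟩, hne⟩
        have := split l
        omega
      · by_cases hN' : (T.filter (fun s => eval s.rep l' ≠ 0)).Nonempty
        · left
          have h2 := rel_card hN' (hres l') (rel_res hl' h')
          have h3 := split l'
          have h4 : ((T.filter (fun s => eval s.rep l ≠ 0)).filter (fun s => eval s.rep l' = 0)).card
            ≤ (T.filter (fun s => eval s.rep l' = 0)).card :=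
            Finset.card_le_card (Finset.filter_subset_filter _ (Finset.filter_subset _ _))
          omega
        · right
          refine ⟨l', hl0', hl', ?_⟩
          rw [allon l' hN']; omega
    · right
      refine ⟨l, hl0, hl, ?_⟩
      rw [allon l hN]; omega

variable {v u x : Fin 3 → K} {a b c : PR K 2} {w d : ℕ}

theorem TFrame.expand (F : TFrame v u x a b c) {l : PR K 2} (hl : l.IsHomogeneous 1) :
    l = C (eval v l) * a + C (eval u l) * b + C (eval x l) * c := by
  have h := (mem_homogeneousSubmodule 1 l).2 hl
  rw [homogeneousSubmodule_one_eq_span_X] at h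
  clear hl
  induction h using Submodule.span_induction with
  | mem y hy => obtain ⟨j, rfl⟩ := hy; simp only [eval_X]; exact F.hX j
  | zero => simp
  | add y z _ _ hy hz =>
    simp only [map_add]
    linear_combination hy + hz
  | smul k y _ hy =>
    simp only [smul_eq_C_mul, map_mul, eval_C]
    linear_combination C k * hy

open Classical in
theorem sr_lower_core (F : TFrame v u x a b c) (hw : 2 ≤ w) (hd : 4 * w + 1 ≤ d)
    {φ : Module.Dual K (Hd K 2 d)} (O O2 : Pm K 2) (hO : O.rep = v) (hO2 : O2.rep = x)
    (H : Core a b c w d (dext φ)) (hα : dext φ (b ^ w * a ^ (d - w)) ≠ 0)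
    (hβ : dext φ (c * a ^ (w - 1) * c ^ (d - w)) ≠ 0) (S0 : Finset (Pm K 2)) (l : Pm K 2 → K)
    (hφ : φ = ∑ t ∈ S0, l t • nu d t.rep) : 2 * d + 2 ≤ S0.card + 2 * w := by
  by_contra hcon
  set S := S0.filter (fun s => l s ≠ 0) with hS
  have hSc : S.card ≤ S0.card := Finset.card_le_card (Finset.filter_subset _ _)
  have hl : ∀ s ∈ S, l s ≠ 0 := fun s hs => (Finset.mem_filter.1 hs).2
  have hev : ∀ f : PR K 2, f.IsHomogeneous d → dext φ f = ∑ s ∈ S, l s * eval s.rep f := by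
    intro f hf
    rw [hφ, dext_comb S0 l hf, hS, Finset.sum_filter]
    refine Finset.sum_congr rfl fun s _ => ?_
    split_ifs with h1
    · rfl
    · push Not at h1; rw [h1, zero_mul]
  have claimA : ∀ (k : ℕ) (g : PR K 2), g.IsHomogeneous k → eval v g ≠ 0 →
      d < (S.filter (fun s => eval s.rep g ≠ 0 ∧ eval s.rep b ≠ 0)).card + k + w := by
    intro k g hg h0
    by_contra hlt
    obtain ⟨h, hh, hz, hne⟩ := sep_many (S.filter (fun s => eval s.rep g ≠ 0 ∧ eval s.rep b ≠ 0)) (q := O)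
      (n := d - k - w) (by
        rw [Finset.mem_filter, hO]
        rintro ⟨_, _, h⟩
        exact h F.qv) (by omega)
    have hgh := hg.mul hh
    have e1 := H.b_eval F (by omega) hgh
    rw [show k + (d - k - w) = d - w by omega] at e1
    have hhom : (b ^ w * (g * h)).IsHomogeneous d := by
      have := (hpow F.hq w).mul hgh
      rwa [show w + (k + (d - k - w)) = d by omega] at this
    rw [hev _ hhom, Finset.sum_eq_zero] at e1
    · rw [hO] at hne
      rw [map_mul] at e1
      exact mul_ne_zero (mul_ne_zero h0 hne) hα e1.symm
    · intro s hs
      rw [map_mul, map_mul, map_pow]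
      by_cases h1 : eval s.rep g = 0
      · rw [h1]; ring
      · by_cases h2 : eval s.rep b = 0
        · rw [h2, zero_pow (by omega)]; ring
        · rw [hz s (Finset.mem_filter.2 ⟨hs, h1, h2⟩)]; ring
  have claimB : ∀ (k : ℕ) (g : PR K 2), g.IsHomogeneous k → eval x g ≠ 0 →
      d < (S.filter (fun s => eval s.rep g ≠ 0 ∧ eval s.rep c ≠ 0 ∧ eval s.rep a ≠ 0)).card + k + w := by
    intro k g hg h0
    by_contra hlt
    obtain ⟨h, hh, hz, hne⟩ := sep_many
      (S.filter (fun s => eval s.rep g ≠ 0 ∧ eval s.rep c ≠ 0 ∧ eval s.rep a ≠ 0)) (q := O2)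
      (n := d - k - w) (by
        rw [Finset.mem_filter, hO2]
        rintro ⟨_, _, _, h⟩
        exact h F.px) (by omega)
    have hgh := hg.mul hh
    have e1 := H.c_eval F (by omega) hgh
    rw [show k + (d - k - w) = d - w by omega] at e1
    have hhom : (c * a ^ (w - 1) * (g * h)).IsHomogeneous d := by
      have := (F.hr.mul (hpow F.hp (w - 1))).mul hgh
      rwa [show 1 + (w - 1) + (k + (d - k - w)) = d by omega] at this
    rw [hev _ hhom, Finset.sum_eq_zero] at e1
    · rw [hO2] at hne
      rw [map_mul] at e1
      exact mul_ne_zero (mul_ne_zero h0 hne) hβ e1.symm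
    · intro s hs
      rw [map_mul, map_mul, map_mul, map_pow]
      by_cases h1 : eval s.rep g = 0
      · rw [h1]; ring
      · by_cases h2 : eval s.rep c = 0
        · rw [h2]; ring
        · by_cases h3 : eval s.rep a = 0
          · rw [h3, zero_pow (by omega)]; ring
          · rw [hz s (Finset.mem_filter.2 ⟨hs, h1, h2, h3⟩)]; ring
  set T := S.filter (fun s => eval s.rep (b * c) ≠ 0) with hT
  by_cases hN : T.Nonempty
  · have hrel : ∀ g : PR K 2, g.IsHomogeneous (d - 2) → ∑ s ∈ T, (l s * eval s.rep (b * c)) * eval s.rep g = 0 := by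
      intro g hg
      have hhom : (b * c * g).IsHomogeneous d := by
        have := (F.hq.mul F.hr).mul hg
        rwa [show 1 + 1 + (d - 2) = d by omega] at this
      have h1 := hev _ hhom
      rw [H.bc] at h1
      rw [h1, hT, Finset.sum_filter]
      refine Finset.sum_congr rfl fun s _ => ?_
      split_ifs with h2
      · rw [map_mul _ (b * c)]; ring
      · push Not at h2
        rw [map_mul _ (b * c), h2]; simp
    have hTS : T.card ≤ S.card := Finset.card_le_card (Finset.filter_subset _ _)
    rcases rel_line (d - 2) hN (fun s hs => by
      rw [Finset.mem_filter] at hs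
      exact mul_ne_zero (hl s hs.1) hs.2) hrel with h1 | ⟨g, hg0, hg, h1⟩
    · omega
    · have h2 : (T.filter (fun s => eval s.rep g = 0)).card ≤ (S.filter (fun s => eval s.rep g = 0)).card :=
        Finset.card_le_card (Finset.filter_subset_filter _ (Finset.filter_subset _ _))
      have h3 : (S.filter (fun s => eval s.rep g = 0)).card + (S.filter (fun s => eval s.rep g ≠ 0)).card = S.card :=
        Finset.card_filter_add_card_filter_not _
      by_cases hv : eval v g = 0
      · by_cases hx : eval x g = 0
        · have e := F.expand hg
          rw [hv, hx] at e
          obtain ⟨s, hs⟩ := Finset.card_pos.1 (show 0 < (T.filter (fun s => eval s.rep g = 0)).card by omega)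
          rw [Finset.mem_filter, hT, Finset.mem_filter] at hs
          have hs2 := hs.2
          rw [e] at hs2
          simp only [C_0, zero_mul, zero_add, add_zero, map_mul, eval_C] at hs2
          rcases mul_eq_zero.1 hs2 with h5 | h5
          · apply hg0; rw [e, h5]; simp
          · apply hs.1.2; rw [map_mul, h5, zero_mul]
        · have h4 := claimB 1 g hg hx
          have h5 : (S.filter (fun s => eval s.rep g ≠ 0 ∧ eval s.rep c ≠ 0 ∧ eval s.rep a ≠ 0)).card ≤
            (S.filter (fun s => eval s.rep g ≠ 0)).card :=
            Finset.card_le_card (Finset.monotone_filter_right _ fun s h => And.left)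
          omega
      · have h4 := claimA 1 g hg hv
        have h5 : (S.filter (fun s => eval s.rep g ≠ 0 ∧ eval s.rep b ≠ 0)).card ≤
          (S.filter (fun s => eval s.rep g ≠ 0)).card :=
          Finset.card_le_card (Finset.monotone_filter_right _ fun s h => And.left)
        omega
  · have h1 := claimA 0 1 (isHomogeneous_one _ _) (by simp)
    have h2 := claimB 0 1 (isHomogeneous_one _ _) (by simp)
    have hdis : Disjoint (S.filter (fun s => eval s.rep (1 : PR K 2) ≠ 0 ∧ eval s.rep b ≠ 0))
        (S.filter (fun s => eval s.rep (1 : PR K 2) ≠ 0 ∧ eval s.rep c ≠ 0 ∧ eval s.rep a ≠ 0)) := by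
      rw [Finset.disjoint_left]
      intro s hs1 hs2
      rw [Finset.mem_filter] at hs1 hs2
      apply hN
      refine ⟨s, Finset.mem_filter.2 ⟨hs1.1, ?_⟩⟩
      rw [map_mul]
      exact mul_ne_zero hs1.2.2 hs2.2.2.1
    have h3 := Finset.card_le_card (Finset.union_subset
      (Finset.filter_subset (fun s => eval s.rep (1 : PR K 2) ≠ 0 ∧ eval s.rep b ≠ 0) S)
      (Finset.filter_subset (fun s => eval s.rep (1 : PR K 2) ≠ 0 ∧ eval s.rep c ≠ 0 ∧ eval s.rep a ≠ 0) S))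
    rw [Finset.card_union_of_disjoint hdis] at h3
    omega
end
end

section
open MvPolynomial
section
variable {K : Type} [Field K] {v u x : Fin 3 → K} {a b c : PR K 2} {w d : ℕ}

theorem TFrame.top_coeff (F : TFrame v u x a b c) (hd : 1 ≤ d) {f : PR K 2} (hf : f.IsHomogeneous d) :
    (rho x v f).coeff d = eval v f := by
  obtain ⟨y, z, hyz⟩ := Ideal.mem_span_pair.1 (F.hom_mod hf)
  obtain ⟨y', _, hy'⟩ := hc_mul (b := y) F.hq d
  obtain ⟨z', hz', hz''⟩ := hc_mul (b := z) F.hr d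
  have hh : (f - C (eval v f) * a ^ d).IsHomogeneous d :=
    (homogeneousSubmodule (Fin 3) K d).sub_mem hf (by
      have := (homogeneousSubmodule (Fin 3) K d).smul_mem (eval v f) (hpow F.hp d)
      rwa [smul_eq_C_mul] at this)
  have e : f - C (eval v f) * a ^ d = b * y' + c * z' := by
    rw [← hy', ← hz'', ← map_add, mul_comm b, mul_comm c, hyz, homogeneousComponent_of_mem hh, if_pos rfl]
  have e2 : f = eval v f • a ^ d + b * y' + c * z' := by
    rw [smul_eq_C_mul]; linear_combination e
  have h3 := congrArg (rho x v) e2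
  rw [map_add, map_add, map_mul, map_mul, map_smul, map_pow, F.rot.rp, F.rot.rq, F.rot.rr] at h3
  rw [h3]
  have hz0 : (rho x v z').coeff d = 0 :=
    Polynomial.coeff_eq_zero_of_natDegree_lt (lt_of_le_of_lt (rho_natDegree x v hz') (by omega))
  simp [hz0]

theorem filt {N : ℕ} {ζ : K} (hζ : IsPrimitiveRoot ζ N) (hN : 0 < N) (r i : ℕ) :
    ∑ k ∈ Finset.range N, (ζ⁻¹ ^ r) ^ k * (ζ ^ k) ^ i = if i ≡ r [MOD N] then (N : K) else 0 := by
  have h0 : ζ ≠ 0 := hζ.ne_zero hN.ne'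
  have e : ∀ k, (ζ⁻¹ ^ r) ^ k * (ζ ^ k) ^ i = (ζ ^ i * (ζ ^ r)⁻¹) ^ k := by
    intro k; rw [mul_pow, inv_pow, pow_right_comm ζ k i, mul_comm]
  simp only [e]
  have hiff : ζ ^ i = ζ ^ r ↔ i ≡ r [MOD N] := by
    have h1 : orderOf (Units.mk0 ζ h0) = N := by
      rw [← orderOf_units, Units.val_mk0, ← hζ.eq_orderOf]
    have h2 := pow_eq_pow_iff_modEq (x := Units.mk0 ζ h0) (n := i) (m := r)
    rw [h1, ← Units.val_inj, Units.val_pow_eq_pow_val, Units.val_pow_eq_pow_val, Units.val_mk0] at h2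
    exact h2
  split_ifs with h
  · rw [hiff.2 h, mul_inv_cancel₀ (pow_ne_zero _ h0)]; simp
  · have hne : ζ ^ i * (ζ ^ r)⁻¹ ≠ 1 := by
      intro h1
      exact h (hiff.1 ((mul_inv_eq_one₀ (pow_ne_zero _ h0)).1 h1))
    have hp : (ζ ^ i * (ζ ^ r)⁻¹) ^ N = 1 := by
      rw [mul_pow, inv_pow, pow_right_comm, hζ.pow_eq_one, pow_right_comm, hζ.pow_eq_one]; simp
    have := geom_sum_mul (ζ ^ i * (ζ ^ r)⁻¹) N
    rw [hp, sub_self] at this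
    exact (mul_eq_zero.1 this).resolve_right (sub_ne_zero.2 hne)

theorem filt_sum {N : ℕ} {ζ : K} (hζ : IsPrimitiveRoot ζ N) (hN : 0 < N) (r : ℕ) :
    ∑ k ∈ Finset.range N, (ζ⁻¹ ^ r) ^ k • nu (m := 2) d (v + ζ ^ k • u) =
      ∑ i ∈ Finset.range (d + 1), (if i ≡ r [MOD N] then (N : K) else 0) • Dco d v u i := by
  simp only [nu_eq_sum, Finset.smul_sum]
  rw [Finset.sum_comm]
  refine Finset.sum_congr rfl fun i _ => ?_
  simp only [smul_smul]
  rw [← Finset.sum_smul, filt hζ hN]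

theorem dext_Dco (i : ℕ) {f : PR K 2} (hf : f.IsHomogeneous d) :
    dext (Dco d v u i) f = (rho v u f).coeff i := by
  rw [dext_hom _ hf]; rfl

/-- the extremal functional -/
noncomputable def phi0 (K : Type) [Field K] (w d : ℕ) (v u x : Fin 3 → K) : Module.Dual K (Hd K 2 d) :=
  ((d - w + 1 : ℕ) : K) • Dco d v u w + (((d - w + 1 : ℕ) : K) • Dco d x v (w - 1) + ((d - w + 1 : ℕ) : K) • Dco d x v d)

theorem phi0_apply {f : PR K 2} (hf : f.IsHomogeneous d) : dext (phi0 K w d v u x) f =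
    ((d - w + 1 : ℕ) : K) * ((rho v u f).coeff w + (rho x v f).coeff (w - 1) + (rho x v f).coeff d) := by
  simp only [phi0, dext_add, dext_smul, LinearMap.add_apply, LinearMap.smul_apply, dext_Dco _ hf, smul_eq_mul]
  ring

theorem phi0_mem (F : TFrame v u x a b c) (hw : 2 ≤ w) (hd : 4 * w + 1 ≤ d) :
    phi0 K w d v u x ∈ schemeSpanSub (Ideal.span {c, b ^ (w + 1)} ⊓ Ideal.span {b, a ^ w}) d := by
  apply mem_scheme_of_dext
  intro f hf hfd
  rw [phi0_apply hfd, F.mem_coeff hf.1 (Nat.lt_succ_self w), F.rot.mem_coeff hf.2 (show w - 1 < w by omega),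
    F.top_coeff (by omega) hfd, ← rho_coeff_zero v u, F.mem_coeff hf.1 (Nat.succ_pos w)]
  simp

theorem phi0_alpha (F : TFrame v u x a b c) (hw : 2 ≤ w) (hd : 4 * w + 1 ≤ d) :
    dext (phi0 K w d v u x) (b ^ w * a ^ (d - w)) = ((d - w + 1 : ℕ) : K) := by
  have hh : (b ^ w * a ^ (d - w)).IsHomogeneous d := by
    have := (hpow F.hq w).mul (hpow F.hp (d - w))
    rwa [show w + (d - w) = d by omega] at this
  rw [phi0_apply hh]
  simp only [map_mul, map_pow, F.rp, F.rq, F.rot.rr]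
  rw [zero_pow (by omega)]
  simp

theorem phi0_beta (F : TFrame v u x a b c) (hw : 2 ≤ w) (hd : 4 * w + 1 ≤ d) :
    dext (phi0 K w d v u x) (c * a ^ (w - 1) * c ^ (d - w)) = ((d - w + 1 : ℕ) : K) := by
  have hh : (c * a ^ (w - 1) * c ^ (d - w)).IsHomogeneous d := by
    have := (F.hr.mul (hpow F.hp (w - 1))).mul (hpow F.hr (d - w))
    rwa [show 1 + (w - 1) + (d - w) = d by omega] at this
  rw [phi0_apply hh]
  simp only [map_mul, map_pow, F.rr, F.rot.rq, F.rot.rp]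
  have : d ≠ w - 1 := by omega
  simp [Polynomial.coeff_X_pow, this]

theorem phi0_span [IsAlgClosed K] [CharZero K] (F : TFrame v u x a b c) (hw : 2 ≤ w) (hd : 4 * w + 1 ≤ d) :
    ∃ pt : Fin ((d - w + 1) + (d - w + 1)) → Fin 3 → K, (∀ j, pt j ≠ 0) ∧
      phi0 K w d v u x ∈ Submodule.span K (Set.range fun j => nu (m := 2) d (pt j)) := by
  obtain ⟨ζ, hζ⟩ := HasEnoughRootsOfUnity.exists_primitiveRoot K (d - w + 1)
  have hN : 0 < d - w + 1 := by omega
  have h1 := filt_sum (d := d) (v := v) (u := u) hζ hN w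
  have h2 := filt_sum (d := d) (v := x) (u := v) hζ hN (w - 1)
  have m1 : ∀ i ∈ Finset.range (d + 1), (i ≡ w [MOD (d - w + 1)] ↔ i = w) := by
    intro i hi
    rw [Finset.mem_range] at hi
    constructor
    · intro h
      rcases le_total i w with hle | hle
      · obtain ⟨k, hk⟩ := (Nat.modEq_iff_dvd' hle).1 h
        rcases Nat.eq_zero_or_pos k with rfl | hk0
        · omega
        · have := Nat.le_mul_of_pos_right (d - w + 1) hk0
          omega
      · obtain ⟨k, hk⟩ := (Nat.modEq_iff_dvd' hle).1 h.symm
        rcases Nat.eq_zero_or_pos k with rfl | hk0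
        · omega
        · have := Nat.le_mul_of_pos_right (d - w + 1) hk0
          omega
    · rintro rfl; rfl
  have m2 : ∀ i ∈ Finset.range (d + 1), (i ≡ w - 1 [MOD (d - w + 1)] ↔ i = w - 1 ∨ i = d) := by
    intro i hi
    rw [Finset.mem_range] at hi
    constructor
    · intro h
      rcases le_total i (w - 1) with hle | hle
      · obtain ⟨k, hk⟩ := (Nat.modEq_iff_dvd' hle).1 h
        rcases Nat.eq_zero_or_pos k with rfl | hk0
        · omega
        · have := Nat.le_mul_of_pos_right (d - w + 1) hk0
          omega
      · obtain ⟨k, hk⟩ := (Nat.modEq_iff_dvd' hle).1 h.symm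
        rcases Nat.eq_zero_or_pos k with rfl | hk0
        · omega
        · rcases Nat.lt_or_ge k 2 with hk2 | hk2
          · have : k = 1 := by omega
            subst this; omega
          · have := Nat.mul_le_mul_left (d - w + 1) hk2
            omega
    · rintro (rfl | rfl)
      · rfl
      · refine Nat.ModEq.symm ((Nat.modEq_iff_dvd' (by omega)).2 ⟨1, by omega⟩)
  have s1 : ∑ i ∈ Finset.range (d + 1), (if i ≡ w [MOD (d - w + 1)] then ((d - w + 1 : ℕ) : K) else 0) • Dco d v u i
      = ((d - w + 1 : ℕ) : K) • Dco d v u w := by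
    rw [Finset.sum_eq_single w]
    · rw [if_pos (Nat.ModEq.refl w)]
    · intro i hi hne
      rw [if_neg (fun h => hne ((m1 i hi).1 h)), zero_smul]
    · intro h; exact absurd (Finset.mem_range.2 (by omega)) h
  have s2 : ∑ i ∈ Finset.range (d + 1), (if i ≡ w - 1 [MOD (d - w + 1)] then ((d - w + 1 : ℕ) : K) else 0) • Dco d x v i
      = ((d - w + 1 : ℕ) : K) • Dco d x v (w - 1) + ((d - w + 1 : ℕ) : K) • Dco d x v d := by
    rw [Finset.sum_eq_add (w - 1) d (by omega)]
    · rw [if_pos ((m2 _ (Finset.mem_range.2 (by omega))).2 (Or.inl rfl)),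
        if_pos ((m2 _ (Finset.mem_range.2 (by omega))).2 (Or.inr rfl))]
    · rintro i hm ⟨hi, hj⟩
      rw [if_neg (fun h => by rcases (m2 i hm).1 h with h | h <;> contradiction), zero_smul]
    · intro h; exact absurd (Finset.mem_range.2 (by omega)) h
    · intro h; exact absurd (Finset.mem_range.2 (by omega)) h
  rw [s1] at h1
  rw [s2] at h2
  refine ⟨Fin.append (fun k => v + ζ ^ k.val • u) (fun k => x + ζ ^ k.val • v), ?_, ?_⟩
  · intro j
    induction j using Fin.addCases with
    | left i => rw [Fin.append_left]; exact F.ne_vu _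
    | right i => rw [Fin.append_right]; exact F.rot.ne_vu _
  · unfold phi0
    rw [← h1, ← h2]
    refine Submodule.add_mem _ (Submodule.sum_mem _ fun k hk => Submodule.smul_mem _ _ (Submodule.subset_span ?_))
      (Submodule.sum_mem _ fun k hk => Submodule.smul_mem _ _ (Submodule.subset_span ?_))
    · exact ⟨Fin.castAdd _ ⟨k, Finset.mem_range.1 hk⟩, by simp only [Fin.append_left]⟩
    · exact ⟨Fin.natAdd _ ⟨k, Finset.mem_range.1 hk⟩, by simp only [Fin.append_right]⟩

theorem main_part [CharZero K] (F : TFrame v u x a b c) (hw : 2 ≤ w) (hd : 4 * w + 1 ≤ d)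
    (O O2 : Pm K 2) (hO : O.rep = v) (hO2 : O2.rep = x) {P : PN K 2 d}
    (h : P.rep ∈ schemeSpanSub (Ideal.span {c, b ^ (w + 1)} ⊓ Ideal.span {b, a ^ w}) d)
    (hα : dext P.rep (b ^ w * a ^ (d - w)) ≠ 0)
    (hβ : dext P.rep (c * a ^ (w - 1) * c ^ (d - w)) ≠ 0) :
    brank d P = 2 * w + 1 ∧ 2 * d + 2 ≤ srank d P + 2 * w := by
  have H := core_of F (by omega) h
  have hexp := rep_expand F (by omega) (by omega) h
  constructor
  · have hup := br_upper_gen F (n1 := w + 1) (n2 := w) (by omega) (by omega) (by omega) _ _ hexp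
    rw [show w + 1 + w = 2 * w + 1 by omega] at hup
    have hmem : 2 * w + 1 ∈ {s | 0 < s ∧ P ∈ secantWrt (XSet K 2 d) s} := ⟨by omega, hup⟩
    apply le_antisymm
    · exact Nat.sInf_le hmem
    · have := Nat.sInf_mem ⟨_, hmem⟩
      exact br_lower F (by omega) hd H hα hβ this.2
  · obtain ⟨S, hS, hSm⟩ := srank_nonempty F P _ _ (n1 := w + 1) (n2 := w) (by omega) (by omega) hexp
    have hne : {r | ∃ S : Finset (PN K 2 d), ↑S ⊆ XSet K 2 d ∧ S.card = r ∧
      P.rep ∈ Submodule.span K (Projectivization.rep '' (S : Set (PN K 2 d)))}.Nonempty := ⟨_, S, hS, rfl, hSm⟩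
    obtain ⟨S', hS', hc, hm⟩ := Nat.sInf_mem hne
    obtain ⟨T, hT, l, hl⟩ := span_conv1 hS' hm
    have := sr_lower_core F hw hd O O2 hO hO2 H hα hβ T l hl
    have hc' : S'.card = srank d P := hc
    omega
end
end

/-- Lemma 7 (`o2`): in `ℙ^2`, with `w ≥ 2`, `d ≥ 4w+1`, distinct lines `L₁, L₂` meeting at
`O`, `A₁ ⊂ L₁` the degree-`(w+1)` divisor supported at `O`, `A₂ ⊂ L₂` the degree-`w` divisor
supported at `O₂ ∈ L₂ ∖ {O}`, and `A = A₁ ∪ A₂`: every `P ∈ ⟨ν_d(A)⟩` not in the span of any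
proper subscheme has `br(P) = 2w+1` and `sr(P) ≥ 2d+2-2w`, and such a `P` with
`sr(P) = 2d+2-2w` exists. -/
theorem stmt9 (K : Type) [Field K] [IsAlgClosed K] [CharZero K]
    (w d : ℕ) (hw : 2 ≤ w) (hd : 4 * w + 1 ≤ d)
    (L1 L2 : Set (Pm K 2)) (hL1 : IsLine L1) (hL2 : IsLine L2) (hne : L1 ≠ L2)
    (O : Pm K 2) (hO : L1 ∩ L2 = {O})
    (A1 : PSub K 2) (hA1L : idealOfSet L1 ≤ A1.I) (hA1z : IsZeroDimI A1.I)
    (hA1deg : idealDeg A1.I = w + 1) (hA1sup : pzeroLocus A1.I = {O})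
    (O2 : Pm K 2) (hO2 : O2 ∈ L2) (hO2O : O2 ≠ O)
    (A2 : PSub K 2) (hA2L : idealOfSet L2 ≤ A2.I) (hA2z : IsZeroDimI A2.I)
    (hA2deg : idealDeg A2.I = w) (hA2sup : pzeroLocus A2.I = {O2}) :
    (∀ P : PN K 2 d, inSpanI (A1.I ⊓ A2.I) d P →
      (∀ A' : PSub K 2, A1.I ⊓ A2.I < A'.I → ¬ inSpanI A'.I d P) →
      brank d P = 2 * w + 1 ∧ 2 * d + 2 ≤ srank d P + 2 * w) ∧
    ∃ P : PN K 2 d, inSpanI (A1.I ⊓ A2.I) d P ∧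
      (∀ A' : PSub K 2, A1.I ⊓ A2.I < A'.I → ¬ inSpanI A'.I d P) ∧
      srank d P + 2 * w = 2 * d + 2 := by
  obtain ⟨e1, a, b, c, F, hc, hb⟩ := exists_frame L1 L2 hL1 hL2 O hO O2 hO2 hO2O
  have hI1 := F.ident A1 O rfl (hA1L hc) hA1sup _ hA1deg
  have hI2 := F.rot.ident A2 O2 rfl (hA2L hb) hA2sup _ hA2deg
  rw [hI1, hI2]
  constructor
  · intro P hP hmin
    exact main_part F hw hd O O2 rfl rfl hP (alpha_ne F (by omega) (by omega) hP hmin)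
      (beta_ne F (by omega) (by omega) hP hmin)
  · have hα := phi0_alpha F hw hd
    have hβ := phi0_beta F hw hd
    have hN : ((d - w + 1 : ℕ) : K) ≠ 0 := Nat.cast_ne_zero.2 (by omega)
    have h0 : phi0 K w d O.rep e1 O2.rep ≠ 0 := by
      intro h
      rw [h] at hα
      apply hN
      rw [← hα]
      simp [dext]
    obtain ⟨y, hy⟩ := Projectivization.exists_smul_eq_mk_rep K _ h0
    rw [Units.smul_def] at hy
    have hmem : (Projectivization.mk K _ h0).rep ∈
        schemeSpanSub (Ideal.span {c, b ^ (w + 1)} ⊓ Ideal.span {b, a ^ w}) d := by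
      rw [← hy]; exact Submodule.smul_mem _ _ (phi0_mem F hw hd)
    have hα' : dext (Projectivization.mk K _ h0).rep (b ^ w * a ^ (d - w)) ≠ 0 := by
      rw [← hy, dext_smul, LinearMap.smul_apply, hα]
      exact mul_ne_zero y.ne_zero hN
    have hβ' : dext (Projectivization.mk K _ h0).rep (c * a ^ (w - 1) * c ^ (d - w)) ≠ 0 := by
      rw [← hy, dext_smul, LinearMap.smul_apply, hβ]
      exact mul_ne_zero y.ne_zero hN
    refine ⟨Projectivization.mk K _ h0, hmem, fun A' hA' => min_of F (by omega) (by omega) hα' hβ' A' hA', ?_⟩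
    have hlow := (main_part F hw hd O O2 rfl rfl hmem hα' hβ').2
    obtain ⟨pt, hpt, hspan⟩ := phi0_span F hw hd
    obtain ⟨S, hS, hcard, hSm⟩ := span_conv2 pt hpt hspan
    have hle : srank d (Projectivization.mk K _ h0) ≤ S.card :=
      Nat.sInf_le ⟨S, hS, rfl, by rw [← hy]; exact Submodule.smul_mem _ _ hSm⟩
    omega
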